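/- arXiv:1710.10981 — 2 statements merged into one kernel-verified Lean document; each statement's English description precedes it below -/
import Mathlib

section
/- Let d = 1, μ = ∏_{t=0}^T μ_t, and let c, φ be nonnegative measurable functions on S that are μ-integrable, with c ≥ Kψ for some K ∈ ℝ and φ ≥ v for some v > 1. Then the capacity-constrained transport problem — minimize ∫_S c dλ over nonnegative λ ∈ M with λ ≪ μ, dλ/dμ ≤ φ, and λ_t = μ_t for all t — and the relaxed dual problem — minimize ∫_S [Σ_{t=0}^T x_t + φ·(Σ_{t=0}^T x_t + c)^−] dμ over x ∈ ∏_t L^0(S_t;ℝ) — are both attained, there is no duality gap, and feasible λ and x are optimal if and only if μ-almost everywhere: dλ/dμ = 0 where −Σ x_t < c; dλ/dμ ∈ [0,φ] where −Σ x_t = c; and dλ/dμ = φ where −Σ x_t > c. Moreover, every feasible x has x_t ∈ L^1(μ_t). -/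
/-!
Write `w = ∑ x_t + c` for potentials `x` and `r = dλ/dμ` for the density of a feasible transport
plan. Since `λ` and `μ` have the same marginals, the sum of the two objectives, when finite, equals
`∫ (φ * w⁻ + r * w) dμ`. As `0 ≤ r ≤ φ`, the integrand is nonnegative and vanishes exactly where
the complementary slackness conditions hold (`weak_duality`). Hence everything follows from the
existence of one pair satisfying these conditions, together with the finiteness of both objectives
at every such pair.

* Finiteness. If a sum of functions of independent coordinates is integrable, then so is each
  summand (`integrable_of_sum`). The slackness conditions alone already make the potentials
  integrable (`integrable_of_slack`); here the strict inequality `1 < v ≤ φ` is essential, because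
  a density which equals `φ` on a large set would have too much mass.
* Existence of potentials (`exists_minimizer`). The relaxed dual integrand is bounded below by
  `min 1 (v - 1) * |w| - c`, so after shifting the potentials by constants a minimizing sequence is
  bounded in `L¹` (`exists_normalized`). By a compactness principle of Komlós type
  (`exists_seq_ae_tendsto`) the minimizing sequence can be chosen to converge almost everywhere,
  and Fatou's lemma shows that its limit is a minimizer.
* Existence of a plan (`exists_dual`). At a minimizer the directional derivative of the dual
  objective is nonnegative in every direction `∑ h_t` (`neg_integral_le_negPartDeriv`). Thus the
  functional `h ↦ -∫ h dμ` on these directions is dominated by the sublinear functional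
  `h ↦ ∫ φ * (directional derivative of w⁻) dμ`. The Hahn-Banach theorem and the Riesz
  representation in `L²(φ μ)` yield a function `g` with values in `[0, 1]`, equal to `1` where
  `w < 0` and to `0` where `0 < w` (`exists_multiplier`). Then `g * φ` is the density of a plan
  with marginals `μ_t`, and the slackness conditions hold by construction.
-/

open MeasureTheory Filter Set
open scoped ENNReal

noncomputable section

/-- The positive part of an extended real number, as an extended nonnegative real. -/
def EReal.posPart' (x : EReal) : ℝ≥0∞ := if x = ⊤ then ⊤ else ENNReal.ofReal x.toReal

/-- Integral of an `EReal`-valued function, with the convention that the value is `⊤`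
whenever the positive part fails to be integrable. -/
def eInt {X : Type*} [MeasurableSpace X] (μ : Measure X) (f : X → EReal) : EReal :=
  if (∫⁻ s, (f s).posPart' ∂μ) = ⊤ then ⊤
  else ((∫⁻ s, (f s).posPart' ∂μ : ℝ≥0∞) : EReal) -
    ((∫⁻ s, (-(f s)).posPart' ∂μ : ℝ≥0∞) : EReal)

/-- Integral of a real function against a finite signed measure, via the Jordan
decomposition. -/
def sInt {X : Type*} [MeasurableSpace X] (m : SignedMeasure X) (f : X → ℝ) : ℝ :=
  ∫ s, f s ∂m.toJordanDecomposition.posPart - ∫ s, f s ∂m.toJordanDecomposition.negPart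

/-- Convexity of an extended-real-valued function on a real vector space. -/
def EConvexOn {E : Type*} [AddCommGroup E] [Module ℝ E] (k : E → EReal) : Prop :=
  ∀ x y : E, ∀ a b : ℝ, 0 ≤ a → 0 ≤ b → a + b = 1 →
    k (a • x + b • y) ≤ (a : EReal) * k x + (b : EReal) * k y

/-- Properness of an extended-real-valued function: it is nowhere `−∞` and somewhere
finite. -/
def EProper {E : Type*} (k : E → EReal) : Prop := (∃ x, k x ≠ ⊤) ∧ ∀ x, k x ≠ ⊥

/-- The recession function `k^∞` of a (convex lsc) function `k`:
`k^∞(x) = sup_{α>0} (k(x̄ + αx) − k(x̄))/α`, the supremum being taken also over all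
points `x̄` of the domain of `k` (for convex lsc `k` it does not depend on `x̄`). -/
def erec {E : Type*} [AddCommGroup E] [Module ℝ E] (k : E → EReal) (x : E) : EReal :=
  ⨆ (y : E) (_ : k y < ⊤) (a : ℝ) (_ : 0 < a),
    (((a⁻¹ : ℝ)) : EReal) * (k (y + a • x) - k y)

/-- The l.s.c. hull of the domain membership:  here simply the closure of the domain. -/
def edom {E : Type*} [TopologicalSpace E] (k : E → EReal) : Set E := closure {x | k x < ⊤}

/-- `v` belongs to the subdifferential `∂k(x)` (w.r.t. the euclidean pairing). -/
def ESubdiffAt {ι : Type*} [Fintype ι] (k : (ι → ℝ) → EReal) (x v : ι → ℝ) : Prop :=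
  ∀ y : ι → ℝ, k x + ((∑ i, v i * (y i - x i) : ℝ) : EReal) ≤ k y

/-- `v` belongs to the normal cone `N_D(x)` of `D` at `x`. -/
def InNormalCone {ι : Type*} [Fintype ι] (D : Set (ι → ℝ)) (x v : ι → ℝ) : Prop :=
  x ∈ D ∧ ∀ y ∈ D, (∑ i, v i * (y i - x i)) ≤ 0

/-- A property of points of `S = ∏ t, S t` holds `(μ_t)`-almost everywhere if it holds on
a Cartesian product of sets of full measure. -/
def ProdAE {T : ℕ} {S : Fin (T + 1) → Type*} [∀ t, MeasurableSpace (S t)]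
    (μt : ∀ t, Measure (S t)) (P : (∀ t, S t) → Prop) : Prop :=
  ∃ A : ∀ t, Set (S t), (∀ t, MeasurableSet (A t) ∧ μt t (A t) = 1) ∧
    ∀ s ∈ Set.univ.pi A, P s

/-- A set-valued mapping `D : S ⇉ ℝ^d` is inner semicontinuous if the preimage of every
open set is open. -/
def InnerSemicontinuous {X E : Type*} [TopologicalSpace X] [TopologicalSpace E]
    (D : X → Set E) : Prop :=
  ∀ O : Set E, IsOpen O → IsOpen {x | (D x ∩ O).Nonempty}

end

noncomputable section

open MeasureTheory Filter Set
open scoped ENNReal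

namespace CapOT

open ProbabilityTheory Topology

/-! ### Sums of functions of independent coordinates -/

section Sums

variable {ι : Type*} [Fintype ι] {S : ι → Type*} [∀ t, MeasurableSpace (S t)]

lemma measurable_sum {x : ∀ t, S t → ℝ} (hx : ∀ t, Measurable (x t)) :
    Measurable (fun s : ∀ t, S t => ∑ t, x t (s t)) :=
  Finset.measurable_fun_sum _ fun t _ => (hx t).comp (measurable_pi_apply t)

lemma indepFun_eval_sum [DecidableEq ι] (μt : ∀ t, Measure (S t)) [∀ t, IsProbabilityMeasure (μt t)]
    {x : ∀ t, S t → ℝ} (hx : ∀ t, Measurable (x t)) (t : ι) :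
    IndepFun (fun s : ∀ t, S t => s t) (fun s => ∑ j ∈ Finset.univ.erase t, x j (s j))
      (Measure.pi μt) := by
  have h := (iIndepFun_pi (μ := μt) (X := fun i => (id : S i → S i))
    (fun i => aemeasurable_id)).indepFun_finset {t} (Finset.univ.erase t) (by simp)
    (fun i => measurable_pi_apply i)
  have m1 : Measurable (fun a : (∀ i : ({t} : Finset ι), S i) => a ⟨t, by simp⟩) :=
    measurable_pi_apply _
  have m2 : Measurable (fun b : (∀ i : Finset.univ.erase t, S i) =>
      ∑ j : Finset.univ.erase t, x j (b j)) :=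
    Finset.measurable_fun_sum _ fun j _ => (hx j).comp (measurable_pi_apply j)
  have h2 := h.comp m1 m2
  have e : (fun s : ∀ t, S t => ∑ j ∈ Finset.univ.erase t, x j (s j)) =
      (fun b : (∀ i : Finset.univ.erase t, S i) => ∑ j : Finset.univ.erase t, x j (b j)) ∘
        fun s i => s i := by
    funext s
    exact (Finset.sum_coe_sort (Finset.univ.erase t) (fun j => x j (s j))).symm
  rw [e]
  exact h2

/-- A real random variable stays in a bounded interval with probability arbitrarily close
to one. -/
lemma exists_bound {Ω : Type*} [MeasurableSpace Ω] (P : Measure Ω) [IsProbabilityMeasure P]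
    {Y : Ω → ℝ} (r : ℝ≥0∞) (hr : r < 1) :
    ∃ M : ℝ, 0 ≤ M ∧ r < P {ω | |Y ω| ≤ M} := by
  have hmono : Monotone (fun n : ℕ => {ω | |Y ω| ≤ (n : ℝ)}) := by
    intro a b hab ω h
    exact le_trans (show |Y ω| ≤ a from h) (by exact_mod_cast hab)
  have h := tendsto_measure_iUnion_atTop (μ := P) hmono
  have hU : (⋃ n : ℕ, {ω | |Y ω| ≤ (n : ℝ)}) = univ := by
    ext ω
    simpa using exists_nat_ge |Y ω|
  rw [hU, measure_univ] at h
  obtain ⟨n, hn⟩ := (h.eventually (lt_mem_nhds hr)).exists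
  exact ⟨n, by positivity, hn⟩

/-- For independent `s t` and `Y`, the expectation of `g (s t)` on an event on `Y`
factorizes. -/
lemma lintegral_eval_indep [DecidableEq ι] (μt : ∀ t, Measure (S t))
    [∀ t, IsProbabilityMeasure (μt t)]
    {x : ∀ t, S t → ℝ} (hx : ∀ t, Measurable (x t)) (t : ι) {g : S t → ℝ≥0∞} (hg : Measurable g)
    (M : ℝ) :
    ∫⁻ s in {s | |∑ j ∈ Finset.univ.erase t, x j (s j)| ≤ M}, g (s t) ∂(Measure.pi μt) =
      (∫⁻ a, g a ∂μt t) *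
        Measure.pi μt {s | |∑ j ∈ Finset.univ.erase t, x j (s j)| ≤ M} := by
  have hYm : Measurable (fun s : ∀ t, S t => ∑ j ∈ Finset.univ.erase t, x j (s j)) :=
    Finset.measurable_fun_sum _ fun t _ => (hx t).comp (measurable_pi_apply t)
  have hB : MeasurableSet {s : ∀ t, S t | |∑ j ∈ Finset.univ.erase t, x j (s j)| ≤ M} :=
    measurableSet_le hYm.abs measurable_const
  have hMm : MeasurableSet {y : ℝ | |y| ≤ M} := measurableSet_le measurable_id.abs measurable_const
  have hI : Measurable ({y : ℝ | |y| ≤ M}.indicator (fun _ => (1 : ℝ≥0∞))) :=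
    measurable_const.indicator hMm
  have hind := (indepFun_eval_sum μt hx t).comp hg hI
  have h := lintegral_mul_eq_lintegral_mul_lintegral_of_indepFun
    (hg.comp (measurable_pi_apply t)) (hI.comp hYm) hind
  have e1 : ∫⁻ s : ∀ t, S t, (g ∘ fun s => s t) s ∂(Measure.pi μt) = ∫⁻ a, g a ∂μt t :=
    (measurePreserving_eval μt t).lintegral_comp hg
  have e2 : ∫⁻ s, (({y : ℝ | |y| ≤ M}.indicator (fun _ => (1 : ℝ≥0∞))) ∘
      fun s : ∀ t, S t => ∑ j ∈ Finset.univ.erase t, x j (s j)) s ∂(Measure.pi μt) =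
      Measure.pi μt {s | |∑ j ∈ Finset.univ.erase t, x j (s j)| ≤ M} := by
    rw [← lintegral_indicator_one hB]
    rfl
  erw [e1, e2] at h
  rw [← h, ← lintegral_indicator hB]
  refine lintegral_congr fun s => ?_
  simp [indicator]

/-- If a sum of functions of independent coordinates is integrable, then so is every
summand. -/
lemma integrable_of_sum (μt : ∀ t, Measure (S t)) [∀ t, IsProbabilityMeasure (μt t)]
    {x : ∀ t, S t → ℝ} (hx : ∀ t, Measurable (x t))
    (h : Integrable (fun s => ∑ t, x t (s t)) (Measure.pi μt)) (t : ι) :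
    Integrable (x t) (μt t) := by
  classical
  refine ⟨(hx t).aestronglyMeasurable, ?_⟩
  obtain ⟨M, hM0, hM⟩ := exists_bound (Measure.pi μt)
    (Y := fun s => ∑ j ∈ Finset.univ.erase t, x j (s j)) 0 one_pos
  have h1 := lintegral_eval_indep μt hx t (hx t).enorm M
  have h2 : ∫⁻ s in {s | |∑ j ∈ Finset.univ.erase t, x j (s j)| ≤ M}, ‖x t (s t)‖ₑ
      ∂(Measure.pi μt) < ⊤ := by
    refine lt_of_le_of_lt ?_
      ((h.norm.add (integrable_const M)).hasFiniteIntegral)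
    have hYm : Measurable (fun s : ∀ t, S t => ∑ j ∈ Finset.univ.erase t, x j (s j)) :=
      Finset.measurable_fun_sum _ fun t _ => (hx t).comp (measurable_pi_apply t)
    refine le_trans (setLIntegral_mono_ae' (measurableSet_le hYm.abs measurable_const)
      (g := fun s => ‖‖∑ t, x t (s t)‖ + M‖ₑ)
      (ae_of_all _ fun s hs => ?_)) (setLIntegral_le_lintegral _ _)
    rw [enorm_le_iff_norm_le]
    have hs' : |∑ j ∈ Finset.univ.erase t, x j (s j)| ≤ M := hs
    have hsum := Finset.add_sum_erase Finset.univ (fun j => x j (s j)) (Finset.mem_univ t)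
    rw [Real.norm_eq_abs, Real.norm_of_nonneg (by positivity), Real.norm_eq_abs, ← hsum]
    have := abs_sub_abs_le_abs_sub (x t (s t)) (-(∑ j ∈ Finset.univ.erase t, x j (s j)))
    rw [sub_neg_eq_add, abs_neg] at this
    linarith
  rw [h1] at h2
  by_contra hcon
  have : ∫⁻ a, ‖x t a‖ₑ ∂μt t = ⊤ := by
    simpa [HasFiniteIntegral] using hcon
  rw [this, ENNReal.top_mul hM.ne'] at h2
  exact lt_irrefl _ h2

/-- Complementary slackness forces every potential to be integrable. On `{|∑_{j≠t} x_j| ≤ M}`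
a very negative `x_t` makes `∑ x` very negative, so that either `c` is large or the density is at
the capacity, which exceeds `v > 1`; as `lam` and `μ` share their marginals, the latter cannot
account for the whole mass when `M` is large. This bounds the negative part of `x_t`; the
positive parts are controlled by the negative ones, because `∑ x ≤ -c ≤ 0` holds
`lam`-almost everywhere. -/
lemma integrable_of_slack (μt : ∀ t, Measure (S t)) [∀ t, IsProbabilityMeasure (μt t)]
    {c φ : (∀ t, S t) → ℝ} (hcm : Measurable c)
    (hc0 : ∀ s, 0 ≤ c s) (hcint : Integrable c (Measure.pi μt))
    {v : ℝ} (hv : 1 < v) (hφv : ∀ s, v ≤ φ s)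
    {lam : Measure (∀ t, S t)} {r : (∀ t, S t) → ℝ≥0∞} (hr : Measurable r)
    (hlam : lam = (Measure.pi μt).withDensity r)
    (hmarg : ∀ t, lam.map (fun s => s t) = μt t)
    {x : ∀ t, S t → ℝ} (hx : ∀ t, Measurable (x t))
    (h0 : ∀ᵐ s ∂(Measure.pi μt), -(∑ t, x t (s t)) < c s → r s = 0)
    (h1 : ∀ᵐ s ∂(Measure.pi μt), c s < -(∑ t, x t (s t)) → r s = ENNReal.ofReal (φ s)) (t : ι) :
    Integrable (x t) (μt t) := by
  classical
  have hsm := measurable_sum hx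
  have hneg : ∀ t, ∫⁻ a, ENNReal.ofReal (-(x t a)) ∂μt t < ⊤ := by
    intro t
    obtain ⟨M, hM0, hM⟩ := exists_bound (Measure.pi μt)
      (Y := fun s => ∑ j ∈ Finset.univ.erase t, x j (s j)) (ENNReal.ofReal v⁻¹)
      (by rw [ENNReal.ofReal_lt_one]; exact inv_lt_one_of_one_lt₀ hv)
    set B := {s : ∀ t, S t | |∑ j ∈ Finset.univ.erase t, x j (s j)| ≤ M} with hBdef
    have hYm : Measurable (fun s : ∀ t, S t => ∑ j ∈ Finset.univ.erase t, x j (s j)) :=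
      Finset.measurable_fun_sum _ fun t _ => (hx t).comp (measurable_pi_apply t)
    have hB : MeasurableSet B := measurableSet_le hYm.abs measurable_const
    set p := (Measure.pi μt) B with hp
    have hp1 : p ≤ 1 := prob_le_one
    -- `C` bounds the contribution of the event where `c` is large
    set C := ∫⁻ s, ENNReal.ofReal (c s + M) ∂(Measure.pi μt) with hC
    have hCfin : C < ⊤ := (hcint.add (integrable_const M)).lintegral_lt_top
    -- the negative part of `x t`, truncated at level `n`
    let g : ℕ → S t → ℝ≥0∞ := fun n a => min (ENNReal.ofReal (-(x t a))) n
    have hgm : ∀ n, Measurable (g n) := fun n =>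
      ((hx t).neg.ennreal_ofReal).min measurable_const
    have hgfin : ∀ n, ∫⁻ a, g n a ∂μt t ≠ ⊤ := fun n => by
      refine ne_of_lt (lt_of_le_of_lt (lintegral_mono (g := fun _ => (n : ℝ≥0∞))
        fun a => min_le_right _ _) ?_)
      simp
    have hlamg : ∀ n, ∫⁻ s, r s * g n (s t) ∂(Measure.pi μt) = ∫⁻ a, g n a ∂μt t := fun n => by
      rw [← hmarg t, lintegral_map (hgm n) (measurable_pi_apply t), hlam,
        lintegral_withDensity_eq_lintegral_mul (Measure.pi μt) hr
          (g := fun s => g n (s t)) ((hgm n).comp (measurable_pi_apply t))]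
      rfl
    have key : ∀ n, (∫⁻ a, g n a ∂μt t) * p ≤
        ENNReal.ofReal v⁻¹ * (∫⁻ a, g n a ∂μt t) + C := by
      intro n
      rw [← lintegral_eval_indep μt hx t (hgm n) M, ← hlamg n,
        ← lintegral_const_mul (f := fun s => r s * g n (s t)) _
          (hr.mul ((hgm n).comp (measurable_pi_apply t))),
        hC, ← lintegral_add_right _ (hcm.add_const M).ennreal_ofReal]
      refine le_trans ?_ (setLIntegral_le_lintegral B _)
      refine setLIntegral_mono_ae' hB ?_
      filter_upwards [h1] with s hs1 hsB
      have hsum := Finset.add_sum_erase Finset.univ (fun j => x j (s j)) (Finset.mem_univ t)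
      have hsB' := abs_le.1 (show |∑ j ∈ Finset.univ.erase t, x j (s j)| ≤ M from hsB)
      by_cases hlt : c s < -(∑ t, x t (s t))
      · rw [hs1 hlt, ← mul_assoc]
        refine le_trans ?_ le_self_add
        have : 1 ≤ ENNReal.ofReal v⁻¹ * ENNReal.ofReal (φ s) := by
          rw [← ENNReal.ofReal_mul (by positivity), ENNReal.one_le_ofReal, inv_mul_eq_div,
            one_le_div (by linarith)]
          exact hφv s
        calc g n (s t) = 1 * g n (s t) := (one_mul _).symm
          _ ≤ _ := by gcongr
      · refine le_trans ?_ le_add_self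
        refine le_trans (min_le_left _ _) (ENNReal.ofReal_le_ofReal ?_)
        linarith
    have hvp : 0 < p - ENNReal.ofReal v⁻¹ := tsub_pos_of_lt hM
    have bound : ∀ n, (∫⁻ a, g n a ∂μt t) ≤ C / (p - ENNReal.ofReal v⁻¹) := by
      intro n
      rw [ENNReal.le_div_iff_mul_le (Or.inl hvp.ne') (Or.inl (ne_of_lt
        (lt_of_le_of_lt (tsub_le_self.trans hp1) ENNReal.one_lt_top))),
        ENNReal.mul_sub (fun _ _ => hgfin n)]
      refine tsub_le_iff_left.2 ?_
      have := key n
      rwa [mul_comm (ENNReal.ofReal v⁻¹)] at this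
    have hsup : ∫⁻ a, ENNReal.ofReal (-(x t a)) ∂μt t = ⨆ n, ∫⁻ a, g n a ∂μt t := by
      rw [← lintegral_iSup hgm]
      · refine lintegral_congr fun a => ?_
        simp only [g]
        refine le_antisymm ?_ (iSup_le fun n => min_le_left _ _)
        obtain ⟨n, hn⟩ := ENNReal.exists_nat_gt (r := ENNReal.ofReal (-(x t a))) (by simp)
        exact le_iSup_of_le n (le_min le_rfl hn.le)
      · intro i j hij a
        exact min_le_min le_rfl (by exact_mod_cast hij)
    rw [hsup]
    refine lt_of_le_of_lt (iSup_le bound) (ENNReal.div_lt_top hCfin.ne hvp.ne.symm)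
  -- the positive part of `x t`, integrated against `lam`
  have hpos : ∫⁻ a, ENNReal.ofReal (x t a) ∂μt t < ⊤ := by
    rw [← hmarg t, lintegral_map (hx t).ennreal_ofReal (measurable_pi_apply t)]
    have hle : ∫⁻ s, ENNReal.ofReal (x t (s t)) ∂lam ≤
        ∫⁻ s, ∑ j, ENNReal.ofReal (-(x j (s j))) ∂lam := by
      refine lintegral_mono_ae ?_
      have hl : ∀ᵐ s ∂lam, ∑ t, x t (s t) ≤ 0 := by
        rw [hlam, ae_withDensity_iff hr]
        filter_upwards [h0] with s hs hrs
        by_contra hcon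
        exact hrs (hs (by have := hc0 s; linarith))
      filter_upwards [hl] with s hs
      rw [← ENNReal.ofReal_toReal (a := ∑ j, ENNReal.ofReal (-(x j (s j)))) (by simp)]
      refine ENNReal.ofReal_le_ofReal ?_
      rw [ENNReal.toReal_sum (by simp)]
      have h2 : ∀ j ∈ Finset.univ.erase t, -(x j (s j)) ≤ (ENNReal.ofReal (-(x j (s j)))).toReal :=
        fun j _ => by
          rw [ENNReal.toReal_ofReal']
          exact le_max_left _ _
      have h3 := Finset.sum_le_sum h2
      rw [Finset.sum_neg_distrib] at h3
      have h4 := Finset.add_sum_erase Finset.univ (fun j => x j (s j)) (Finset.mem_univ t)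
      have h5 := Finset.add_sum_erase Finset.univ
        (fun j => (ENNReal.ofReal (-(x j (s j)))).toReal) (Finset.mem_univ t)
      have h6 : 0 ≤ (ENNReal.ofReal (-(x t (s t)))).toReal := ENNReal.toReal_nonneg
      linarith
    refine lt_of_le_of_lt hle ?_
    rw [lintegral_finsetSum (f := fun j (s : ∀ t, S t) => ENNReal.ofReal (-(x j (s j)))) _
      fun j _ => ((hx j).neg.comp (measurable_pi_apply j)).ennreal_ofReal]
    refine ENNReal.sum_lt_top.2 fun j _ => ?_
    have := hneg j
    rwa [← hmarg j, lintegral_map (f := fun a => ENNReal.ofReal (-(x j a)))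
      (hx j).neg.ennreal_ofReal (measurable_pi_apply j)] at this
  refine ⟨(hx t).aestronglyMeasurable, ?_⟩
  refine lt_of_le_of_lt (lintegral_mono (g := fun a => ENNReal.ofReal (x t a) +
    ENNReal.ofReal (-(x t a))) fun a => ?_) ?_
  · rw [Real.enorm_eq_ofReal_abs]
    rcases abs_cases (x t a) with h | h <;> rw [h.1]
    · exact le_self_add
    · exact le_add_self
  · rw [lintegral_add_left (hx t).ennreal_ofReal]
    exact ENNReal.add_lt_top.2 ⟨hpos, hneg t⟩

/-- Potentials with integrable sum can be shifted by constants adding up to zero so that each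
of them is bounded in `L¹` by the norm of the sum. -/
lemma exists_normalized [Nonempty ι] (μt : ∀ t, Measure (S t)) [∀ t, IsProbabilityMeasure (μt t)]
    {x : ∀ t, S t → ℝ} (hx : ∀ t, Measurable (x t))
    (h : Integrable (fun s => ∑ t, x t (s t)) (Measure.pi μt)) :
    ∃ x' : ∀ t, S t → ℝ, (∀ t, Measurable (x' t)) ∧ (∀ s : ∀ t, S t, ∑ t, x' t (s t) = ∑ t, x t (s t)) ∧
      (∀ t, Integrable (x' t) (μt t)) ∧
      ∀ t, ∫ a, |x' t a| ∂μt t ≤ 2 * ∫ s, |∑ t, x t (s t)| ∂(Measure.pi μt) := by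
  classical
  have hxi := integrable_of_sum μt hx h
  set B := ∫ s, |∑ t, x t (s t)| ∂(Measure.pi μt) with hB
  let a : ι → ℝ := fun t => ∫ b, x t b ∂μt t
  have hA : ∫ s, ∑ t, x t (s t) ∂(Measure.pi μt) = ∑ t, a t := by
    rw [integral_finsetSum _ fun t _ => integrable_comp_eval (hxi t)]
    exact Finset.sum_congr rfl fun t _ => integral_comp_eval (hx t).aestronglyMeasurable
  set A := ∑ t, a t with hAdef
  have hAB : |A| ≤ B := by
    rw [← hA]
    exact abs_integral_le_integral_abs
  have hw : ∀ t, ∫ b, |x t b - a t + A| ∂μt t ≤ B := by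
    intro t
    -- the sign of the recentred `x t` serves as a test function
    let sg : S t → ℝ := fun b => if 0 ≤ x t b - a t + A then 1 else -1
    have hsgm : Measurable sg := Measurable.ite
      (measurableSet_le measurable_const (((hx t).sub_const _).add_const _))
      measurable_const measurable_const
    have hsg1 : ∀ b, |sg b| = 1 := fun b => by
      simp only [sg]; split_ifs <;> simp
    have hRm : Measurable (fun s : ∀ t, S t => ∑ j ∈ Finset.univ.erase t, x j (s j)) :=
      Finset.measurable_fun_sum _ fun t _ => (hx t).comp (measurable_pi_apply t)
    have hRi : Integrable (fun s : ∀ t, S t => ∑ j ∈ Finset.univ.erase t, x j (s j))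
        (Measure.pi μt) :=
      integrable_finsetSum _ fun t _ => integrable_comp_eval (hxi t)
    have hR : ∫ s, ∑ j ∈ Finset.univ.erase t, x j (s j) ∂(Measure.pi μt) = A - a t := by
      rw [integral_finsetSum _ fun t _ => integrable_comp_eval (hxi t), hAdef,
        ← Finset.add_sum_erase Finset.univ a (Finset.mem_univ t), add_sub_cancel_left]
      exact Finset.sum_congr rfl fun t _ => integral_comp_eval (hx t).aestronglyMeasurable
    have hind := (indepFun_eval_sum μt hx t).comp hsgm measurable_id
    have hmul := hind.integral_fun_mul_eq_mul_integral
      (hsgm.comp (measurable_pi_apply t)).aestronglyMeasurable hRm.aestronglyMeasurable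
    simp only [Function.comp, id] at hmul
    rw [hR, integral_comp_eval (f := sg) hsgm.aestronglyMeasurable] at hmul
    have hsgi : Integrable sg (μt t) := Integrable.of_bound hsgm.aestronglyMeasurable 1
      (ae_of_all _ fun b => (hsg1 b).le)
    have hsx : Integrable (fun b => sg b * x t b) (μt t) :=
      (hxi t).bdd_mul (c := 1) hsgm.aestronglyMeasurable (ae_of_all _ fun b => (hsg1 b).le)
    have hsR : Integrable (fun s : ∀ t, S t => sg (s t) * ∑ j ∈ Finset.univ.erase t, x j (s j))
        (Measure.pi μt) :=
      hRi.bdd_mul (c := 1) (hsgm.comp (measurable_pi_apply t)).aestronglyMeasurable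
        (ae_of_all _ fun b => (hsg1 _).le)
    have e1 : ∫ b, |x t b - a t + A| ∂μt t = ∫ b, sg b * x t b ∂μt t + (∫ b, sg b ∂μt t) * (A - a t) := by
      rw [← integral_mul_const, ← integral_add hsx (hsgi.mul_const _)]
      refine integral_congr_ae (ae_of_all _ fun b => ?_)
      simp only [sg]
      split_ifs with hb
      · rw [abs_of_nonneg hb]; ring
      · rw [abs_of_neg (not_le.1 hb)]; ring
    rw [e1, ← hmul, ← integral_comp_eval (μ := μt) (f := fun b => sg b * x t b)
      hsx.aestronglyMeasurable, ← integral_add (integrable_comp_eval hsx) hsR, hB]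
    refine integral_mono ((integrable_comp_eval hsx).add hsR) h.abs fun s => ?_
    have hsum := Finset.add_sum_erase Finset.univ (fun j => x j (s j)) (Finset.mem_univ t)
    simp only
    rw [← mul_add, hsum]
    refine (le_abs_self _).trans ?_
    rw [abs_mul, hsg1, one_mul]
  have hcard : (0 : ℝ) < Fintype.card ι := by exact_mod_cast Fintype.card_pos
  refine ⟨fun t b => x t b - a t + A / Fintype.card ι, fun t => ((hx t).sub_const _).add_const _,
    fun s => ?_, fun t => ((hxi t).sub (integrable_const _)).add (integrable_const _), fun t => ?_⟩
  · rw [Finset.sum_add_distrib, Finset.sum_sub_distrib, Finset.sum_const, Finset.card_univ,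
      nsmul_eq_mul, mul_div_cancel₀ _ hcard.ne']
    ring
  · have hi : Integrable (fun b => |x t b - a t + A|) (μt t) :=
      (((hxi t).sub (integrable_const _)).add (integrable_const _)).abs
    have h1 : ∫ b, |x t b - a t + A / Fintype.card ι| ∂μt t ≤
        ∫ b, (|x t b - a t + A| + B) ∂μt t := by
      refine integral_mono (((hxi t).sub (integrable_const _)).add (integrable_const _)).abs
        (hi.add (integrable_const _)) fun b => ?_
      have h2 : x t b - a t + A / Fintype.card ι =
        (x t b - a t + A) + -(A * (1 - 1 / Fintype.card ι)) := by ring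
      simp only [h2]
      refine (abs_add_le _ _).trans ?_
      rw [abs_neg, abs_mul]
      have h3 : |1 - 1 / (Fintype.card ι : ℝ)| ≤ 1 := by
        have : 1 / (Fintype.card ι : ℝ) ≤ 1 := by
          rw [div_le_one hcard]; exact_mod_cast Fintype.card_pos
        have h5 : 0 < 1 / (Fintype.card ι : ℝ) := by positivity
        rw [abs_of_nonneg] <;> linarith
      nlinarith [abs_nonneg A]
    rw [integral_add hi (integrable_const _)] at h1
    have := hw t
    simp at h1
    linarith

end Sums

/-! ### A compactness principle for nonnegative functions -/

/-- A compactness principle of Komlós type: a decreasing sequence of midpoint-convex sets of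
nonnegative functions, bounded in `L¹`, has an almost everywhere convergent selection.
Near-minimizers `z n` of the strictly convex functional `z ↦ ∑ i, ∫ exp (-z i)` over the
`n`-th set do the job: the midpoint identity
`exp (-a) + exp (-b) - 2 exp (-(a + b) / 2) = (exp (-a / 2) - exp (-b / 2)) ^ 2`
makes `exp (-z n / 2)` a Cauchy sequence in `L²`. -/
lemma exists_seq_ae_tendsto {Ω κ : Type*} [MeasurableSpace Ω] [Fintype κ] (P : Measure Ω)
    [IsProbabilityMeasure P] (A : ℕ → Set (κ → Ω → ℝ)) (hanti : Antitone A)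
    (hne : ∀ n, (A n).Nonempty)
    (hmid : ∀ n, ∀ z ∈ A n, ∀ w ∈ A n, (fun i ω => (z i ω + w i ω) / 2) ∈ A n)
    (hmeas : ∀ z ∈ A 0, ∀ i, Measurable (z i)) (hnn : ∀ z ∈ A 0, ∀ i ω, 0 ≤ z i ω)
    (C : ℝ≥0∞) (hCtop : C ≠ ⊤) (hC : ∀ z ∈ A 0, ∀ i, ∫⁻ ω, ENNReal.ofReal (z i ω) ∂P ≤ C) :
    ∃ z : ℕ → κ → Ω → ℝ, (∀ n, z n ∈ A n) ∧
      ∀ i, ∀ᵐ ω ∂P, ∃ l, Tendsto (fun n => z n i ω) atTop (𝓝 l) := by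
  have hsub : ∀ n, ∀ z ∈ A n, z ∈ A 0 := fun n z hz => hanti (Nat.zero_le n) hz
  have hexpi : ∀ z ∈ A 0, ∀ i, Integrable (fun ω => Real.exp (-z i ω)) P := fun z hz i =>
    Integrable.of_bound (hmeas z hz i).neg.exp.aestronglyMeasurable 1 (ae_of_all _ fun ω => by
      rw [Real.norm_of_nonneg (Real.exp_pos _).le, Real.exp_le_one_iff]
      linarith [hnn z hz i ω])
  let J : (κ → Ω → ℝ) → ℝ := fun z => ∑ i, ∫ ω, Real.exp (-z i ω) ∂P
  have hJ0 : ∀ z, 0 ≤ J z := fun z =>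
    Finset.sum_nonneg fun i _ => integral_nonneg fun ω => (Real.exp_pos _).le
  have hJ1 : ∀ z ∈ A 0, J z ≤ Fintype.card κ := fun z hz => by
    have : ∀ i ∈ (Finset.univ : Finset κ), ∫ ω, Real.exp (-z i ω) ∂P ≤ 1 := fun i _ => by
      have := integral_mono (hexpi z hz i) (integrable_const (1 : ℝ)) fun ω => by
        simpa using hnn z hz i ω
      simpa using this
    simpa using Finset.sum_le_sum this
  let j : ℕ → ℝ := fun n => sInf (J '' A n)
  have hbdd : ∀ n, BddBelow (J '' A n) := fun n => ⟨0, by rintro _ ⟨z, _, rfl⟩; exact hJ0 z⟩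
  have hjle : ∀ n, ∀ z ∈ A n, j n ≤ J z := fun n z hz => csInf_le (hbdd n) ⟨z, hz, rfl⟩
  have hjmono : Monotone j := fun n m hnm =>
    csInf_le_csInf (hbdd n) ((hne m).image _) (image_mono (hanti hnm))
  have hjb : BddAbove (range j) := ⟨Fintype.card κ, by
    rintro _ ⟨n, rfl⟩
    obtain ⟨z, hz⟩ := hne n
    exact (hjle n z hz).trans (hJ1 z (hsub n z hz))⟩
  set L := ⨆ n, j n with hL
  have hjL : Tendsto j atTop (𝓝 L) := tendsto_atTop_ciSup hjmono hjb
  have hex : ∀ n : ℕ, ∃ z ∈ A n, J z < j n + 1 / ((n : ℝ) + 1) := fun n => by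
    obtain ⟨_, ⟨z, hz, rfl⟩, hlt⟩ := exists_lt_of_csInf_lt ((hne n).image J)
      (show sInf (J '' A n) < j n + 1 / ((n : ℝ) + 1) from lt_add_of_pos_right _ (by positivity))
    exact ⟨z, hz, hlt⟩
  choose z hzA hzJ using hex
  have hz0 : ∀ n, z n ∈ A 0 := fun n => hsub n _ (hzA n)
  let u : κ → ℕ → Ω → ℝ := fun i n ω => Real.exp (-z n i ω / 2)
  have hum : ∀ i n, Measurable (u i n) := fun i n => ((hmeas _ (hz0 n) i).neg.div_const 2).exp
  have hu1 : ∀ i n ω, u i n ω ≤ 1 := fun i n ω => by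
    have := hnn _ (hz0 n) i ω
    simp only [u]
    rw [Real.exp_le_one_iff]
    linarith
  have hu0 : ∀ i n ω, 0 < u i n ω := fun i n ω => Real.exp_pos _
  let δ : ℕ → ℝ := fun N => 2 * (L - j N + 1 / ((N : ℝ) + 1))
  have hδ : Tendsto δ atTop (𝓝 0) := by
    have := ((tendsto_const_nhds (x := L)).sub hjL).add (tendsto_one_div_add_atTop_nhds_zero_nat (𝕜 := ℝ))
    simpa [δ] using this.const_mul 2
  have hcauchy : ∀ N n m, N ≤ n → N ≤ m → ∀ i, ∫ ω, (u i n ω - u i m ω) ^ 2 ∂P ≤ δ N := by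
    intro N n m hn hm i
    have hmA := hmid N _ (hanti hn (hzA n)) _ (hanti hm (hzA m))
    have h1 := hjle N _ hmA
    have hid : ∑ i, ∫ ω, (u i n ω - u i m ω) ^ 2 ∂P =
        J (z n) + J (z m) - 2 * J (fun i ω => (z n i ω + z m i ω) / 2) := by
      simp only [J]
      rw [Finset.mul_sum, ← Finset.sum_add_distrib, ← Finset.sum_sub_distrib]
      refine Finset.sum_congr rfl fun i _ => ?_
      rw [← integral_const_mul, ← integral_add (hexpi _ (hz0 n) i) (hexpi _ (hz0 m) i),
        ← integral_sub (f := fun ω => Real.exp (-z n i ω) + Real.exp (-z m i ω))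
          ((hexpi _ (hz0 n) i).add (hexpi _ (hz0 m) i))
          ((hexpi _ (hsub N _ hmA) i).const_mul 2)]
      refine integral_congr_ae (ae_of_all _ fun ω => ?_)
      simp only [u]
      have e1 : Real.exp (-z n i ω) = Real.exp (-z n i ω / 2) * Real.exp (-z n i ω / 2) := by
        rw [← Real.exp_add]; ring_nf
      have e2 : Real.exp (-z m i ω) = Real.exp (-z m i ω / 2) * Real.exp (-z m i ω / 2) := by
        rw [← Real.exp_add]; ring_nf
      have e3 : Real.exp (-((z n i ω + z m i ω) / 2)) =
          Real.exp (-z n i ω / 2) * Real.exp (-z m i ω / 2) := by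
        rw [← Real.exp_add]; ring_nf
      rw [e1, e2, e3]; ring
    have h2 : ∫ ω, (u i n ω - u i m ω) ^ 2 ∂P ≤ ∑ i, ∫ ω, (u i n ω - u i m ω) ^ 2 ∂P :=
      Finset.single_le_sum (f := fun i => ∫ ω, (u i n ω - u i m ω) ^ 2 ∂P)
        (fun i _ => integral_nonneg fun ω => sq_nonneg _) (Finset.mem_univ i)
    have hn' : (1 : ℝ) / ((n : ℝ) + 1) ≤ 1 / ((N : ℝ) + 1) := by gcongr
    have hm' : (1 : ℝ) / ((m : ℝ) + 1) ≤ 1 / ((N : ℝ) + 1) := by gcongr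
    have := hzJ n
    have := hzJ m
    have := le_ciSup hjb n
    have := le_ciSup hjb m
    simp only [δ]
    linarith
  have hev : ∀ k : ℕ, ∀ᶠ N in atTop, (δ N) ^ ((2 : ℝ)⁻¹) < (1 / 2 : ℝ) ^ k := fun k => by
    have h := hδ.rpow_const (p := (2 : ℝ)⁻¹) (Or.inr (by norm_num))
    rw [Real.zero_rpow (by norm_num)] at h
    exact h.eventually (gt_mem_nhds (by positivity))
  obtain ⟨ns, hns, hnsδ⟩ := extraction_forall_of_eventually hev
  have hconv : ∀ i, ∀ᵐ ω ∂P, ∃ l, Tendsto (fun k => u i (ns k) ω) atTop (𝓝 l) := by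
    intro i
    refine Lp.ae_tendsto_of_cauchy_eLpNorm (p := 2) (f := fun k => u i (ns k))
      (fun k => (hum i _).aestronglyMeasurable) (by norm_num)
      (B := fun k => ENNReal.ofReal ((1 / 2 : ℝ) ^ k)) ?_ ?_
    · rw [← ENNReal.ofReal_tsum_of_nonneg (fun k => by positivity) summable_geometric_two]
      exact ENNReal.ofReal_ne_top
    · intro N n m hn hm
      have hml : MemLp (u i (ns n) - u i (ns m)) 2 P := by
        refine MemLp.of_bound ((hum i _).sub (hum i _)).aestronglyMeasurable 1
          (ae_of_all _ fun ω => ?_)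
        rw [Real.norm_eq_abs, abs_le, Pi.sub_apply]
        constructor <;> linarith [hu0 i (ns n) ω, hu1 i (ns n) ω, hu0 i (ns m) ω, hu1 i (ns m) ω]
      rw [hml.eLpNorm_eq_integral_rpow_norm (by norm_num) (by norm_num)]
      refine (ENNReal.ofReal_lt_ofReal_iff (by positivity)).2 (lt_of_le_of_lt ?_ (hnsδ N))
      have e : ∫ ω, ‖(u i (ns n) - u i (ns m)) ω‖ ^ (2 : ℝ≥0∞).toReal ∂P =
          ∫ ω, (u i (ns n) ω - u i (ns m) ω) ^ 2 ∂P := by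
        refine integral_congr_ae (ae_of_all _ fun ω => ?_)
        simp
      rw [e]
      exact Real.rpow_le_rpow (integral_nonneg fun ω => sq_nonneg _)
        (hcauchy _ _ _ (hns.monotone hn) (hns.monotone hm) i) (by norm_num)
  refine ⟨fun k => z (ns k), fun k => hanti hns.le_apply (hzA _), fun i => ?_⟩
  have hfat : ∀ᵐ ω ∂P, liminf (fun k => ENNReal.ofReal (z (ns k) i ω)) atTop < ⊤ := by
    have hm : ∀ k, Measurable (fun ω => ENNReal.ofReal (z (ns k) i ω)) := fun k =>
      (hmeas _ (hz0 _) i).ennreal_ofReal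
    refine ae_lt_top (Measurable.liminf hm) (ne_top_of_le_ne_top hCtop ?_)
    refine (lintegral_liminf_le hm).trans ?_
    refine liminf_le_of_frequently_le' (Frequently.of_forall fun k => hC _ (hz0 _) i)
  filter_upwards [hconv i, hfat] with ω ⟨l, hl⟩ hf
  have hz : ∀ k, z (ns k) i ω = -2 * Real.log (u i (ns k) ω) := fun k => by
    simp only [u]; rw [Real.log_exp]; ring
  have hl0 : 0 ≤ l := ge_of_tendsto' hl fun k => (hu0 _ _ _).le
  rcases hl0.eq_or_lt with h0 | hpos
  · -- a vanishing limit would make `z` explode, which the `L¹` bound excludes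
    exfalso
    subst h0
    have h1 : Tendsto (fun k => u i (ns k) ω) atTop (𝓝[>] 0) :=
      tendsto_nhdsWithin_iff.2 ⟨hl, Eventually.of_forall fun k => hu0 _ _ _⟩
    have h2 : Tendsto (fun k => z (ns k) i ω) atTop atTop := by
      simp only [hz]
      exact (Real.tendsto_log_nhdsGT_zero.comp h1).const_mul_atBot_of_neg (by norm_num)
    have h3 := (ENNReal.tendsto_ofReal_atTop.comp h2).liminf_eq
    simp only [Function.comp_def] at h3
    rw [h3] at hf
    exact lt_irrefl _ hf
  · refine ⟨-2 * Real.log l, ?_⟩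
    simp only [hz]
    exact (hl.log hpos.ne').const_mul _

/-! ### Extended integrals and the relaxed dual integrand -/

lemma eInt_of_integrable {Ω : Type*} [MeasurableSpace Ω] (P : Measure Ω) {f : Ω → ℝ}
    (hf : Integrable f P) :
    eInt P (fun s => ((f s : ℝ) : EReal)) = ((∫ s, f s ∂P : ℝ) : EReal) := by
  have hp : ∀ r : ℝ, EReal.posPart' ((r : ℝ) : EReal) = ENNReal.ofReal r := fun r => by
    simp [EReal.posPart']
  have hn : ∀ r : ℝ, EReal.posPart' (-((r : ℝ) : EReal)) = ENNReal.ofReal (-r) := fun r => by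
    rw [← EReal.coe_neg, hp]
  have h1 := hf.lintegral_lt_top
  have h2 := hf.neg.lintegral_lt_top
  simp only [Pi.neg_apply] at h2
  simp only [eInt, hp, hn, if_neg h1.ne]
  rw [integral_eq_lintegral_pos_part_sub_lintegral_neg_part hf, EReal.coe_sub,
    EReal.coe_ennreal_toReal h1.ne, EReal.coe_ennreal_toReal h2.ne]

lemma eInt_of_not_integrable {Ω : Type*} [MeasurableSpace Ω] (P : Measure Ω) {f c : Ω → ℝ}
    (hfm : Measurable f) (hc : Integrable c P) (hle : ∀ s, -c s ≤ f s) (hf : ¬ Integrable f P) :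
    eInt P (fun s => ((f s : ℝ) : EReal)) = ⊤ := by
  have hp : ∀ r : ℝ, EReal.posPart' ((r : ℝ) : EReal) = ENNReal.ofReal r := fun r => by
    simp [EReal.posPart']
  simp only [eInt, hp]
  rw [if_pos]
  by_contra hcon
  refine hf ⟨hfm.aestronglyMeasurable, ?_⟩
  refine lt_of_le_of_lt (lintegral_mono (g := fun a => ENNReal.ofReal (f a) +
    ENNReal.ofReal (c a)) fun a => ?_) ?_
  · rw [Real.enorm_eq_ofReal_abs]
    rcases abs_cases (f a) with h | h <;> rw [h.1]
    · exact le_self_add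
    · exact le_trans (ENNReal.ofReal_le_ofReal (by linarith [hle a])) le_add_self
  · rw [lintegral_add_left hfm.ennreal_ofReal]
    exact ENNReal.add_lt_top.2 ⟨lt_top_iff_ne_top.2 hcon, hc.lintegral_lt_top⟩

/-- The integrand of the relaxed dual problem, as a function of the sum `y` of the potentials. -/
def integrand (c φ y : ℝ) : ℝ := y + φ * max (-(y + c)) 0

lemma integrand_lower {c φ y v : ℝ} (hφ : v ≤ φ) :
    min 1 (v - 1) * |y + c| ≤ integrand c φ y + c := by
  have h1 := min_le_left 1 (v - 1)
  have h2 := min_le_right 1 (v - 1)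
  unfold integrand
  rcases le_total 0 (y + c) with h | h
  · rw [abs_of_nonneg h, max_eq_right (by linarith)]
    nlinarith
  · rw [abs_of_nonpos h, max_eq_left (by linarith)]
    nlinarith

lemma integrand_lower' {c φ y v : ℝ} (hv : 1 < v) (hφ : v ≤ φ) :
    -c ≤ integrand c φ y := by
  have := integrand_lower (c := c) (y := y) hφ
  have h2 : 0 ≤ min 1 (v - 1) * |y + c| :=
    mul_nonneg (le_min zero_le_one (by linarith)) (abs_nonneg _)
  linarith

lemma integrand_mid {c φ y z : ℝ} (hφ : 0 ≤ φ) :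
    integrand c φ ((y + z) / 2) ≤ (integrand c φ y + integrand c φ z) / 2 := by
  unfold integrand
  have : max (-((y + z) / 2 + c)) 0 ≤ (max (-(y + c)) 0 + max (-(z + c)) 0) / 2 := by
    refine max_le ?_ ?_
    · linarith [le_max_left (-(y + c)) 0, le_max_left (-(z + c)) 0]
    · linarith [le_max_right (-(y + c)) 0, le_max_right (-(z + c)) 0]
  nlinarith

lemma measurable_integrand {Ω : Type*} [MeasurableSpace Ω] {c φ y : Ω → ℝ} (hc : Measurable c)
    (hφ : Measurable φ) (hy : Measurable y) :
    Measurable (fun s => integrand (c s) (φ s) (y s)) :=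
  hy.add (hφ.mul ((hy.add hc).neg.max measurable_const))

lemma integrable_of_integrand {Ω : Type*} [MeasurableSpace Ω] {P : Measure Ω} {c φ y : Ω → ℝ}
    (hc : Integrable c P) (hym : Measurable y) {v : ℝ} (hv : 1 < v) (hφv : ∀ s, v ≤ φ s)
    (h : Integrable (fun s => integrand (c s) (φ s) (y s)) P) : Integrable y P := by
  have hα : 0 < min 1 (v - 1) := lt_min one_pos (by linarith)
  have h1 : Integrable (fun s => y s + c s) P := by
    refine ((h.add hc).const_mul (min 1 (v - 1))⁻¹).mono'
      (hym.aestronglyMeasurable.add hc.aestronglyMeasurable) (ae_of_all _ fun s => ?_)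
    rw [Real.norm_eq_abs, inv_mul_eq_div, le_div_iff₀ hα, mul_comm]
    exact integrand_lower (hφv s)
  refine (h1.sub hc).congr (ae_of_all _ fun s => ?_)
  simp

/-! ### Attainment in the relaxed dual problem -/

section Attain

variable {ι : Type*} [Fintype ι] {S : ι → Type*} [∀ t, MeasurableSpace (S t)]

/-- The relaxed dual problem is attained. Coercivity of the integrand bounds a normalized
minimizing sequence in `L¹`; the compactness principle is applied to positive and negative parts
of the potentials, and Fatou's lemma passes the objective to the limit. -/
lemma exists_minimizer [Nonempty ι] (μt : ∀ t, Measure (S t)) [∀ t, IsProbabilityMeasure (μt t)]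
    {c φ : (∀ t, S t) → ℝ} (hcm : Measurable c) (hφm : Measurable φ)
    (hc0 : ∀ s, 0 ≤ c s) (hcint : Integrable c (Measure.pi μt))
    {v : ℝ} (hv : 1 < v) (hφv : ∀ s, v ≤ φ s) :
    ∃ x : ∀ t, S t → ℝ, (∀ t, Measurable (x t)) ∧
      Integrable (fun s => integrand (c s) (φ s) (∑ t, x t (s t))) (Measure.pi μt) ∧
      ∀ x' : ∀ t, S t → ℝ, (∀ t, Measurable (x' t)) →
        Integrable (fun s => integrand (c s) (φ s) (∑ t, x' t (s t))) (Measure.pi μt) →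
        ∫ s, integrand (c s) (φ s) (∑ t, x t (s t)) ∂(Measure.pi μt) ≤
          ∫ s, integrand (c s) (φ s) (∑ t, x' t (s t)) ∂(Measure.pi μt) := by
  classical
  set μ := Measure.pi μt with hμ
  have hφ0 : ∀ s, 0 ≤ φ s := fun s => by linarith [hφv s]
  let F : (∀ t, S t → ℝ) → (∀ t, S t) → ℝ := fun x s => integrand (c s) (φ s) (∑ t, x t (s t))
  have hFm : ∀ x, (∀ t, Measurable (x t)) → Measurable (F x) := fun x hx =>
    measurable_integrand hcm hφm (measurable_sum hx)
  have hFc : ∀ x s, -c s ≤ F x s := fun x s => integrand_lower' hv (hφv s)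
  let V : Set ℝ := {r | ∃ x, (∀ t, Measurable (x t)) ∧ Integrable (F x) μ ∧ ∫ s, F x s ∂μ = r}
  have hF0 : F (fun _ _ => 0) = fun _ => 0 := by
    funext s
    simp only [F, integrand, Finset.sum_const_zero, zero_add]
    rw [max_eq_right (by linarith [hc0 s]), mul_zero]
  have hVne : V.Nonempty := ⟨_, fun _ _ => 0, fun t => measurable_const,
    by rw [hF0]; exact integrable_zero _ _ _, rfl⟩
  have hVb : BddBelow V := ⟨-∫ s, c s ∂μ, by
    rintro _ ⟨x, hx, hxi, rfl⟩
    rw [← integral_neg]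
    exact integral_mono hcint.neg hxi (hFc x)⟩
  set m := sInf V with hm
  have hα : 0 < min 1 (v - 1) := lt_min one_pos (by linarith)
  set α := min 1 (v - 1) with hαdef
  set B := (m + 1 + ∫ s, c s ∂μ) / α + ∫ s, c s ∂μ with hB
  -- potentials encoded through a pair (index `true`, index `false`) of nonnegative functions
  let A : ℕ → Set (ι × Bool → (∀ t, S t) → ℝ) := fun n => {z |
    ∃ p : ι × Bool → ∀ t, S t → ℝ, (∀ i t, Measurable (p i t)) ∧ (∀ i s, z i s = p i i.1 (s i.1)) ∧
      (∀ i s, 0 ≤ z i s) ∧ (∀ i, ∫⁻ s, ENNReal.ofReal (z i s) ∂μ ≤ ENNReal.ofReal (2 * B)) ∧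
      Integrable (F fun t a => p (t, true) t a - p (t, false) t a) μ ∧
      ∫ s, F (fun t a => p (t, true) t a - p (t, false) t a) s ∂μ ≤ m + 1 / ((n : ℝ) + 1)}
  have hzm : ∀ z ∈ A 0, ∀ i, Measurable (z i) := by
    rintro z ⟨p, hpm, hzp, -⟩ i
    rw [show z i = fun s => p i i.1 (s i.1) from funext (hzp i)]
    exact (hpm i i.1).comp (measurable_pi_apply _)
  have hanti : Antitone A := by
    rintro n k hnk z ⟨p, h1, h2, h3, h4, h5, h6⟩
    refine ⟨p, h1, h2, h3, h4, h5, h6.trans ?_⟩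
    have : (1 : ℝ) / ((k : ℝ) + 1) ≤ 1 / ((n : ℝ) + 1) := by gcongr
    linarith
  have hne : ∀ n, (A n).Nonempty := by
    intro n
    obtain ⟨_, ⟨x, hx, hxi, rfl⟩, hlt⟩ := exists_lt_of_csInf_lt hVne
      (show sInf V < m + 1 / ((n : ℝ) + 1) from lt_add_of_pos_right _ (by positivity))
    have hyi : Integrable (fun s => ∑ t, x t (s t)) μ :=
      integrable_of_integrand hcint (measurable_sum hx) hv hφv hxi
    have hyB : ∫ s, |∑ t, x t (s t)| ∂μ ≤ B := by
      have hxc : Integrable (fun s => F x s + c s) μ := hxi.add hcint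
      have h1 : ∫ s, |∑ t, x t (s t)| ∂μ ≤ ∫ s, (α⁻¹ * (F x s + c s) + c s) ∂μ := by
        refine integral_mono hyi.abs ((hxc.const_mul _).add hcint) fun s => ?_
        have h2 := integrand_lower (c := c s) (y := ∑ t, x t (s t)) (hφv s)
        have h3 : |∑ t, x t (s t) + c s| ≤ α⁻¹ * (F x s + c s) := by
          rw [inv_mul_eq_div, le_div_iff₀ hα, mul_comm]
          exact h2
        have h4 := abs_sub (∑ t, x t (s t) + c s) (c s)
        rw [add_sub_cancel_right, abs_of_nonneg (hc0 s)] at h4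
        simp only
        linarith
      rw [integral_add (hxc.const_mul _) hcint, integral_const_mul,
        integral_add hxi hcint] at h1
      refine h1.trans ?_
      rw [hB, inv_mul_eq_div]
      have h5 : (1 : ℝ) / ((n : ℝ) + 1) ≤ 1 := by
        rw [div_le_one (by positivity)]; linarith [(Nat.cast_nonneg n : (0 : ℝ) ≤ n)]
      have h6 : ∫ s, F x s ∂μ ≤ m + 1 := by linarith
      gcongr
    obtain ⟨x', hx', hsum, hx'i, hx'B⟩ := exists_normalized μt hx hyi
    have hbd : ∀ t (q : S t → ℝ), Measurable q → (∀ a, q a ≤ |x' t a|) →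
        ∫⁻ s, ENNReal.ofReal (q (s t)) ∂μ ≤ ENNReal.ofReal (2 * B) := by
      intro t q hq hqx
      rw [(measurePreserving_eval μt t).lintegral_comp (f := fun a => ENNReal.ofReal (q a))
        hq.ennreal_ofReal]
      calc ∫⁻ a, ENNReal.ofReal (q a) ∂μt t ≤ ∫⁻ a, ENNReal.ofReal |x' t a| ∂μt t :=
            lintegral_mono fun a => ENNReal.ofReal_le_ofReal (hqx a)
        _ = ENNReal.ofReal (∫ a, |x' t a| ∂μt t) :=
            (ofReal_integral_eq_lintegral_ofReal (hx'i t).abs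
              (ae_of_all _ fun a => abs_nonneg _)).symm
        _ ≤ _ := ENNReal.ofReal_le_ofReal (by linarith [hx'B t])
    let p : ι × Bool → ∀ t, S t → ℝ := fun i t a =>
      if i.2 then max (x' t a) 0 else max (-(x' t a)) 0
    have hpx : (fun t a => p (t, true) t a - p (t, false) t a) = x' := by
      funext t a
      simp only [p, if_true, Bool.false_eq_true, if_false]
      rcases le_total 0 (x' t a) with h | h
      · rw [max_eq_left h, max_eq_right (by linarith), sub_zero]
      · rw [max_eq_right h, max_eq_left (by linarith)]; ring
    have hFx : F x' = F x := by
      funext s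
      simp only [F]
      rw [hsum]
    refine ⟨fun i s => p i i.1 (s i.1), p, fun i t => ?_, fun i s => rfl, fun i s => ?_,
      fun i => ?_, ?_, ?_⟩
    · rcases i with ⟨t', b⟩
      cases b
      · simpa [p] using (hx' t).neg.max measurable_const
      · simpa [p] using (hx' t).max measurable_const
    · rcases i with ⟨t', b⟩
      cases b <;> simp [p]
    · rcases i with ⟨t', b⟩
      cases b
      · simp only [p, Bool.false_eq_true, if_false]
        exact hbd t' _ ((hx' t').neg.max measurable_const) fun a =>
          max_le (neg_le_abs _) (abs_nonneg _)
      · simp only [p, if_true]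
        exact hbd t' _ ((hx' t').max measurable_const) fun a =>
          max_le (le_abs_self _) (abs_nonneg _)
    · rw [hpx, hFx]; exact hxi
    · rw [hpx, hFx]; exact hlt.le
  have hmid : ∀ n, ∀ z ∈ A n, ∀ w ∈ A n, (fun i ω => (z i ω + w i ω) / 2) ∈ A n := by
    rintro n z ⟨p, hp1, hp2, hp3, hp4, hp5, hp6⟩ w ⟨q, hq1, hq2, hq3, hq4, hq5, hq6⟩
    have hzm' : ∀ i, Measurable (z i) := fun i => by
      rw [show z i = fun s => p i i.1 (s i.1) from funext (hp2 i)]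
      exact (hp1 i i.1).comp (measurable_pi_apply _)
    set P := F fun t a => p (t, true) t a - p (t, false) t a with hP
    set Q := F fun t a => q (t, true) t a - q (t, false) t a with hQ
    let r : ∀ t, S t → ℝ := fun t a => (p (t, true) t a + q (t, true) t a) / 2 -
      (p (t, false) t a + q (t, false) t a) / 2
    have hrm : ∀ t, Measurable (r t) := fun t =>
      (((hp1 _ _).add (hq1 _ _)).div_const 2).sub (((hp1 _ _).add (hq1 _ _)).div_const 2)
    have hle : ∀ s, F r s ≤ (P s + Q s) / 2 := fun s => by
      have h := integrand_mid (c := c s) (y := ∑ t, (p (t, true) t (s t) - p (t, false) t (s t)))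
        (z := ∑ t, (q (t, true) t (s t) - q (t, false) t (s t))) (hφ0 s)
      refine le_trans (le_of_eq ?_) h
      simp only [F]
      congr 1
      rw [← Finset.sum_add_distrib, Finset.sum_div]
      exact Finset.sum_congr rfl fun t _ => by ring
    have hPQ : Integrable (fun s => (P s + Q s) / 2) μ := (hp5.add hq5).div_const 2
    have hcn : Integrable (fun s => -c s) μ := hcint.neg
    have hint : Integrable (F r) μ :=
      integrable_of_le_of_le (hFm r hrm).aestronglyMeasurable
        (ae_of_all _ (hFc r)) (ae_of_all _ hle) hcn hPQ
    refine ⟨fun i t a => (p i t a + q i t a) / 2, fun i t => ((hp1 i t).add (hq1 i t)).div_const 2,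
      fun i s => ?_, fun i s => ?_, fun i => ?_, hint, ?_⟩
    · simp only [hp2, hq2]
    · have := hp3 i s
      have := hq3 i s
      positivity
    · have e : ∀ s, ENNReal.ofReal ((z i s + w i s) / 2) =
          ENNReal.ofReal 2⁻¹ * (ENNReal.ofReal (z i s) + ENNReal.ofReal (w i s)) := fun s => by
        rw [← ENNReal.ofReal_add (hp3 i s) (hq3 i s), ← ENNReal.ofReal_mul (by norm_num)]
        congr 1
        ring
      simp only [e]
      rw [lintegral_const_mul' _ _ ENNReal.ofReal_ne_top, lintegral_add_left (hzm' i).ennreal_ofReal]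
      calc _ ≤ ENNReal.ofReal 2⁻¹ * (ENNReal.ofReal (2 * B) + ENNReal.ofReal (2 * B)) :=
            mul_le_mul_right (add_le_add (hp4 i) (hq4 i)) _
        _ = ENNReal.ofReal (2 * B) := by
            rw [← two_mul, ← mul_assoc, show (2 : ℝ≥0∞) = ENNReal.ofReal 2 by simp,
              ← ENNReal.ofReal_mul (by norm_num)]
            norm_num
    · refine (integral_mono hint hPQ hle).trans ?_
      rw [integral_div, integral_add hp5 hq5]
      linarith
  obtain ⟨z, hzA, hzlim⟩ := exists_seq_ae_tendsto μ A hanti hne hmid hzm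
    (by rintro z ⟨p, h1, h2, h3, h4, h5, h6⟩; exact h3) (ENNReal.ofReal (2 * B))
    ENNReal.ofReal_ne_top (by rintro z ⟨p, h1, h2, h3, h4, h5, h6⟩; exact h4)
  choose p hpm hzp hz0 hzB hpi hpF using hzA
  let xs : ℕ → ∀ t, S t → ℝ := fun n t a => p n (t, true) t a - p n (t, false) t a
  have hxsm : ∀ n t, Measurable (xs n t) := fun n t => (hpm n _ _).sub (hpm n _ _)
  let x : ∀ t, S t → ℝ := fun t a => limsup (fun n => xs n t a) atTop
  have hxm : ∀ t, Measurable (x t) := fun t => Measurable.limsup fun n => hxsm n t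
  have hlim : ∀ᵐ s ∂μ, Tendsto (fun n => F (xs n) s) atTop (𝓝 (F x s)) := by
    have hall : ∀ᵐ s ∂μ, ∀ i, ∃ l, Tendsto (fun n => z n i s) atTop (𝓝 l) := ae_all_iff.2 hzlim
    filter_upwards [hall] with s hs
    have hx : ∀ t, Tendsto (fun n => xs n t (s t)) atTop (𝓝 (x t (s t))) := fun t => by
      obtain ⟨l1, hl1⟩ := hs (t, true)
      obtain ⟨l2, hl2⟩ := hs (t, false)
      have h : Tendsto (fun n => xs n t (s t)) atTop (𝓝 (l1 - l2)) := by
        refine (hl1.sub hl2).congr fun n => ?_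
        simp only [hzp, xs]
      have : x t (s t) = l1 - l2 := h.limsup_eq
      rwa [this]
    have hy := tendsto_finsetSum Finset.univ fun t _ => hx t
    exact hy.add (((hy.add_const (c s)).neg.max tendsto_const_nhds).const_mul (φ s))
  have hFx := hFm x hxm
  have hI : ∫⁻ s, ENNReal.ofReal (F x s + c s) ∂μ ≤ ENNReal.ofReal (m + ∫ s, c s ∂μ) := by
    have e : ∫⁻ s, ENNReal.ofReal (F x s + c s) ∂μ =
        ∫⁻ s, liminf (fun n => ENNReal.ofReal (F (xs n) s + c s)) atTop ∂μ := by
      refine lintegral_congr_ae ?_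
      filter_upwards [hlim] with s hs
      exact (ENNReal.tendsto_ofReal (hs.add_const (c s))).liminf_eq.symm
    rw [e]
    refine (lintegral_liminf_le fun n => ((hFm _ (hxsm n)).add hcm).ennreal_ofReal).trans ?_
    have hub : ∀ n : ℕ, ∫⁻ s, ENNReal.ofReal (F (xs n) s + c s) ∂μ ≤
        ENNReal.ofReal (m + 1 / ((n : ℝ) + 1) + ∫ s, c s ∂μ) := fun n => by
      have h := ofReal_integral_eq_lintegral_ofReal ((hpi n).add hcint)
        (ae_of_all _ fun s => by
          have := hFc (xs n) s
          simp only [Pi.add_apply, Pi.zero_apply]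
          linarith)
      simp only [Pi.add_apply] at h
      refine h.symm.le.trans (ENNReal.ofReal_le_ofReal ?_)
      rw [integral_add (hpi n) hcint]
      linarith [hpF n]
    have ht : Tendsto (fun n : ℕ => ENNReal.ofReal (m + 1 / ((n : ℝ) + 1) + ∫ s, c s ∂μ)) atTop
        (𝓝 (ENNReal.ofReal (m + ∫ s, c s ∂μ))) := by
      refine ENNReal.tendsto_ofReal ?_
      have := ((tendsto_one_div_add_atTop_nhds_zero_nat (𝕜 := ℝ)).const_add m).add_const
        (∫ s, c s ∂μ)
      simpa using this
    rw [← ht.liminf_eq]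
    exact liminf_le_liminf (Eventually.of_forall hub)
  have hnn : ∀ s, 0 ≤ F x s + c s := fun s => by linarith [hFc x s]
  have hint' : Integrable (fun s => F x s + c s) μ := by
    refine ⟨(hFx.add hcm).aestronglyMeasurable, ?_⟩
    rw [hasFiniteIntegral_iff_ofReal (ae_of_all _ hnn)]
    exact hI.trans_lt ENNReal.ofReal_lt_top
  have hint : Integrable (F x) μ := (hint'.sub hcint).congr (ae_of_all _ fun s => by simp)
  refine ⟨x, hxm, hint, fun x' hx' hx'i => ?_⟩
  have h1 : ∫ s, F x s ∂μ ≤ m := by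
    rw [← ofReal_integral_eq_lintegral_ofReal hint' (ae_of_all _ hnn)] at hI
    have hmc : 0 ≤ m + ∫ s, c s ∂μ := by
      have : -∫ s, c s ∂μ ≤ m := le_csInf hVne (by
        rintro _ ⟨x, hx, hxi, rfl⟩
        rw [← integral_neg]
        exact integral_mono hcint.neg hxi (hFc x))
      linarith
    rw [ENNReal.ofReal_le_ofReal_iff hmc, integral_add hint hcint] at hI
    linarith
  exact h1.trans (csInf_le hVb ⟨x', hx', hx'i, rfl⟩)

end Attain

/-! ### Subgradients of the negative part -/

/-- The directional derivative at `w` of `w ↦ max (-w) 0` in the direction `h`. -/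
def negPartDeriv (w h : ℝ) : ℝ := if w < 0 then -h else if w = 0 then max (-h) 0 else 0

lemma negPartDeriv_add (w a b : ℝ) :
    negPartDeriv w (a + b) ≤ negPartDeriv w a + negPartDeriv w b := by
  unfold negPartDeriv
  split_ifs
  · linarith
  · refine max_le ?_ ?_
    · linarith [le_max_left (-a) 0, le_max_left (-b) 0]
    · linarith [le_max_right (-a) 0, le_max_right (-b) 0]
  · simp

lemma negPartDeriv_mul (w : ℝ) {k : ℝ} (hk : 0 < k) (a : ℝ) :
    negPartDeriv w (k * a) = k * negPartDeriv w a := by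
  unfold negPartDeriv
  split_ifs
  · ring
  · rw [mul_max_of_nonneg _ _ hk.le]
    simp
  · simp

lemma abs_negPartDeriv_le (w h : ℝ) : |negPartDeriv w h| ≤ |h| := by
  unfold negPartDeriv
  split_ifs
  · rw [abs_neg]
  · rw [abs_of_nonneg (le_max_right _ _)]
    exact max_le (neg_le_abs h) (abs_nonneg h)
  · simp

lemma measurable_negPartDeriv {Ω : Type*} [MeasurableSpace Ω] {w h : Ω → ℝ} (hw : Measurable w)
    (hh : Measurable h) : Measurable (fun ω => negPartDeriv (w ω) (h ω)) :=
  Measurable.ite (measurableSet_lt hw measurable_const) hh.neg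
    (Measurable.ite (measurableSet_eq_fun hw measurable_const) (hh.neg.max measurable_const)
      measurable_const)

lemma abs_negPart_sub_le (w a : ℝ) : |max (-(w + a)) 0 - max (-w) 0| ≤ |a| := by
  refine (abs_max_sub_max_le_abs _ _ _).trans (le_of_eq ?_)
  rw [← abs_neg]
  congr 1
  ring

lemma tendsto_negPartDeriv (w h : ℝ) :
    Tendsto (fun n : ℕ => ((n : ℝ) + 1) * (max (-(w + 1 / ((n : ℝ) + 1) * h)) 0 - max (-w) 0)) atTop
      (𝓝 (negPartDeriv w h)) := by
  have ht : Tendsto (fun n : ℕ => w + 1 / ((n : ℝ) + 1) * h) atTop (𝓝 w) := by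
    simpa using ((tendsto_one_div_add_atTop_nhds_zero_nat (𝕜 := ℝ)).mul_const h).const_add w
  have hn : ∀ n : ℕ, (n : ℝ) + 1 ≠ 0 := fun n => by positivity
  refine tendsto_const_nhds.congr' ?_
  unfold negPartDeriv
  rcases lt_trichotomy w 0 with hw | hw | hw
  · filter_upwards [ht.eventually (gt_mem_nhds hw)] with n hlt
    rw [if_pos hw, max_eq_left (by linarith), max_eq_left (by linarith)]
    have := hn n
    field_simp
    ring
  · subst hw
    refine Eventually.of_forall fun n => ?_
    rw [if_neg (lt_irrefl _), if_pos rfl]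
    beta_reduce
    rw [zero_add, neg_zero, max_self, sub_zero,
      mul_max_of_nonneg _ _ (by positivity), mul_zero]
    have := hn n
    congr 1
    field_simp
  · filter_upwards [ht.eventually (lt_mem_nhds hw)] with n hlt
    rw [if_neg hw.not_gt, if_neg hw.ne', max_eq_right (by linarith), max_eq_right (by linarith),
      sub_self, mul_zero]

lemma integrable_negPartDeriv {Ω : Type*} [MeasurableSpace Ω] {P : Measure Ω} {w h : Ω → ℝ}
    (hw : Measurable w) (hh : Integrable h P) :
    Integrable (fun ω => negPartDeriv (w ω) (h ω)) P := by
  obtain ⟨h', hm, he⟩ := hh.1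
  have hi : Integrable (fun ω => negPartDeriv (w ω) (h' ω)) P :=
    (hh.congr he).mono (measurable_negPartDeriv hw hm.measurable).aestronglyMeasurable
      (ae_of_all _ fun ω => abs_negPartDeriv_le _ _)
  refine hi.congr ?_
  filter_upwards [he] with ω hω
  rw [hω]

lemma L2_inner_eq {Ω : Type*} [MeasurableSpace Ω] {P : Measure Ω} (f g : Lp ℝ 2 P) :
    inner ℝ f g = ∫ ω, f ω * g ω ∂P := by
  rw [L2.inner_def]
  refine integral_congr_ae (ae_of_all _ fun ω => ?_)
  simp [mul_comm]

/-- A linear functional on `L²` that is dominated on a subspace by the directional derivative of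
`∫ max (-w) 0` is represented there by `-g`, where `g` belongs to the subdifferential: `g = 1`
on `{w < 0}`, `g = 0` on `{0 < w}` and `0 ≤ g ≤ 1` elsewhere. The Hahn-Banach theorem extends
the functional to the whole space, the Riesz theorem represents the extension, and testing with
signed indicator functions gives the bounds. -/
lemma exists_multiplier {Ω : Type*} [MeasurableSpace Ω] (P : Measure Ω) [IsFiniteMeasure P]
    {w : Ω → ℝ} (hw : Measurable w) (V : Submodule ℝ (Lp ℝ 2 P)) (L : Lp ℝ 2 P →ₗ[ℝ] ℝ)
    (hL : ∀ h ∈ V, L h ≤ ∫ ω, negPartDeriv (w ω) (h ω) ∂P) :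
    ∃ g : Ω → ℝ, Measurable g ∧ (∀ ω, 0 ≤ g ω ∧ g ω ≤ 1) ∧ (∀ ω, w ω < 0 → g ω = 1) ∧
      (∀ ω, 0 < w ω → g ω = 0) ∧ ∀ h ∈ V, L h = -∫ ω, g ω * h ω ∂P := by
  have hint : ∀ h : Lp ℝ 2 P, Integrable h P := fun h => (Lp.memLp h).integrable (by norm_num)
  let N : Lp ℝ 2 P → ℝ := fun h => ∫ ω, negPartDeriv (w ω) (h ω) ∂P
  obtain ⟨l, hlV, hlN⟩ := exists_extension_of_le_sublinear
    (⟨V, L.comp V.subtype⟩ : Lp ℝ 2 P →ₗ.[ℝ] ℝ) N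
    (fun k hk h => by
      simp only [N]
      rw [← integral_const_mul]
      refine integral_congr_ae ?_
      filter_upwards [Lp.coeFn_smul k h] with ω hω
      rw [hω, Pi.smul_apply, smul_eq_mul, negPartDeriv_mul _ hk])
    (fun a b => by
      simp only [N]
      rw [← integral_add (integrable_negPartDeriv hw (hint a))
        (integrable_negPartDeriv hw (hint b))]
      refine integral_mono_ae (integrable_negPartDeriv hw (hint _))
        ((integrable_negPartDeriv hw (hint a)).add (integrable_negPartDeriv hw (hint b))) ?_
      filter_upwards [Lp.coeFn_add a b] with ω hω
      rw [hω]
      exact negPartDeriv_add _ _ _)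
    (fun h => hL h h.2)
  let o : Lp ℝ 2 P := Lp.const 2 P (1 : ℝ)
  -- `l` is dominated by the `L¹` norm, hence continuous for the `L²` norm
  have hbd : ∀ h, l h ≤ ‖o‖ * ‖h‖ := by
    intro h
    have h1 : N h ≤ ∫ ω, |h ω| ∂P :=
      integral_mono (integrable_negPartDeriv hw (hint h)) (hint h).abs fun ω =>
        (le_abs_self _).trans (abs_negPartDeriv_le _ _)
    have h2 : ∫ ω, |h ω| ∂P = inner ℝ o |h| := by
      rw [L2_inner_eq]
      refine integral_congr_ae ?_
      filter_upwards [Lp.coeFn_abs h, Lp.coeFn_const (p := 2) (μ := P) (1 : ℝ)] with ω ha hb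
      rw [ha, hb]
      simp
    have h3 := real_inner_le_norm o |h|
    rw [norm_abs_eq_norm] at h3
    linarith [hlN h]
  let lc : Lp ℝ 2 P →L[ℝ] ℝ := l.mkContinuous (‖o‖) fun h => by
    rw [Real.norm_eq_abs, abs_le]
    have h1 := hbd h
    have h2 := hbd (-h)
    rw [map_neg, norm_neg] at h2
    constructor <;> linarith
  set k := (InnerProductSpace.toDual ℝ (Lp ℝ 2 P)).symm lc with hk
  have hkl : ∀ h, l h = ∫ ω, k ω * h ω ∂P := fun h => by
    rw [← L2_inner_eq, hk, InnerProductSpace.toDual_symm_apply]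
    rfl
  have hind : ∀ (B : Set Ω) (hB : MeasurableSet B) (q : ℝ),
      q * ∫ ω in B, k ω ∂P ≤ ∫ ω in B, negPartDeriv (w ω) q ∂P := by
    intro B hB q
    have h1 := hlN (indicatorConstLp 2 hB (measure_ne_top P B) q)
    have he := indicatorConstLp_coeFn (p := 2) (hs := hB) (hμs := measure_ne_top P B) (c := q)
    rw [hkl] at h1
    have e1 : ∫ ω, k ω * (indicatorConstLp 2 hB (measure_ne_top P B) q : Lp ℝ 2 P) ω ∂P =
        q * ∫ ω in B, k ω ∂P := by
      rw [← integral_indicator hB, ← integral_const_mul]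
      refine integral_congr_ae ?_
      filter_upwards [he] with ω hω
      rw [hω]
      by_cases h : ω ∈ B <;> simp [h, mul_comm]
    have e2 : N (indicatorConstLp 2 hB (measure_ne_top P B) q) =
        ∫ ω in B, negPartDeriv (w ω) q ∂P := by
      rw [← integral_indicator hB]
      refine integral_congr_ae ?_
      filter_upwards [he] with ω hω
      simp only [hω]
      by_cases h : ω ∈ B <;> simp [h, negPartDeriv]
    rwa [e1, e2] at h1
  have hk1 : ∀ᵐ ω ∂P, k ω ≤ negPartDeriv (w ω) 1 := by
    refine ae_le_of_forall_setIntegral_le (hint k)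
      (integrable_negPartDeriv hw (integrable_const 1)) fun B hB _ => ?_
    simpa using hind B hB 1
  have hk2 : ∀ᵐ ω ∂P, -k ω ≤ negPartDeriv (w ω) (-1) := by
    refine ae_le_of_forall_setIntegral_le (hint k).neg
      (integrable_negPartDeriv hw (integrable_const (-1))) fun B hB _ => ?_
    have h := hind B hB (-1)
    rw [neg_one_mul, ← integral_neg] at h
    exact h
  have hkm : Measurable k := (Lp.stronglyMeasurable k).measurable
  let g : Ω → ℝ := fun ω => if w ω < 0 then 1 else if w ω = 0 then max 0 (min 1 (-k ω)) else 0
  have hgk : ∀ᵐ ω ∂P, g ω = -k ω := by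
    filter_upwards [hk1, hk2] with ω h1 h2
    simp only [g, negPartDeriv] at h1 h2 ⊢
    split_ifs at h1 h2 ⊢ <;> norm_num at h1 h2
    · linarith
    · rw [min_eq_right (by linarith), max_eq_right (by linarith)]
    · linarith
  refine ⟨g, ?_, fun ω => ?_, fun ω h => ?_, fun ω h => ?_, fun h hh => ?_⟩
  · exact Measurable.ite (measurableSet_lt hw measurable_const) measurable_const
      (Measurable.ite (measurableSet_eq_fun hw measurable_const)
        (measurable_const.max (measurable_const.min hkm.neg)) measurable_const)
  · simp only [g]
    split_ifs
    · norm_num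
    · exact ⟨le_max_left _ _, max_le zero_le_one (min_le_left _ _)⟩
    · norm_num
  · simp only [g]
    rw [if_pos h]
  · simp only [g]
    rw [if_neg h.not_gt, if_neg h.ne']
  · have e : L h = l h := (hlV ⟨h, hh⟩).symm
    rw [e, hkl, ← integral_neg]
    refine integral_congr_ae ?_
    filter_upwards [hgk] with ω hω
    rw [hω]
    ring

/-! ### Optimality conditions and construction of the transport plan -/

/-- First-order optimality: if `y` minimizes the relaxed dual objective along the segments
towards `y + h`, then the derivative at `y` in the direction `h` is nonnegative. -/
lemma neg_integral_le_negPartDeriv {Ω : Type*} [MeasurableSpace Ω] {P : Measure Ω}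
    {c φ y h : Ω → ℝ} (hc : Measurable c) (hφ : Measurable φ) (hφ1 : ∀ s, 1 ≤ φ s)
    (hy : Measurable y) (hh : Measurable h) (hhi : Integrable (fun s => φ s * h s) P)
    (hyi : Integrable (fun s => integrand (c s) (φ s) (y s)) P)
    (hmin : ∀ n : ℕ, Integrable (fun s => integrand (c s) (φ s) (y s + 1 / ((n : ℝ) + 1) * h s)) P →
      ∫ s, integrand (c s) (φ s) (y s) ∂P ≤
        ∫ s, integrand (c s) (φ s) (y s + 1 / ((n : ℝ) + 1) * h s) ∂P) :
    -∫ s, h s ∂P ≤ ∫ s, φ s * negPartDeriv (y s + c s) (h s) ∂P := by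
  have hh1 : Integrable h P := hhi.mono hh.aestronglyMeasurable (ae_of_all _ fun s => by
    rw [norm_mul, Real.norm_of_nonneg (by linarith [hφ1 s] : 0 ≤ φ s)]
    exact le_mul_of_one_le_left (norm_nonneg (h s)) (hφ1 s))
  let D : ℕ → Ω → ℝ := fun n s => ((n : ℝ) + 1) *
    (max (-(y s + c s + 1 / ((n : ℝ) + 1) * h s)) 0 - max (-(y s + c s)) 0)
  have hDm : ∀ n, Measurable (D n) := fun n =>
    ((((hy.add hc).add (hh.const_mul _)).neg.max measurable_const).sub
      ((hy.add hc).neg.max measurable_const)).const_mul _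
  have hDb : ∀ n s, ‖φ s * D n s‖ ≤ ‖φ s * h s‖ := fun n s => by
    have hn : (0 : ℝ) < (n : ℝ) + 1 := by positivity
    rw [norm_mul (φ s), norm_mul (φ s)]
    refine mul_le_mul_of_nonneg_left ?_ (norm_nonneg (φ s))
    simp only [D, Real.norm_eq_abs]
    rw [abs_mul, abs_of_pos hn]
    have h1 := abs_negPart_sub_le (y s + c s) (1 / ((n : ℝ) + 1) * h s)
    rw [abs_mul, abs_of_pos (by positivity : 0 < 1 / ((n : ℝ) + 1))] at h1
    calc _ ≤ ((n : ℝ) + 1) * (1 / ((n : ℝ) + 1) * |h s|) := by gcongr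
      _ = |h s| := by field_simp
  have hDi : ∀ n, Integrable (fun s => φ s * D n s) P := fun n =>
    hhi.mono (hφ.mul (hDm n)).aestronglyMeasurable (ae_of_all _ (hDb n))
  have hlim : Tendsto (fun n => ∫ s, φ s * D n s ∂P) atTop
      (𝓝 (∫ s, φ s * negPartDeriv (y s + c s) (h s) ∂P)) := by
    refine tendsto_integral_of_dominated_convergence (fun s => ‖φ s * h s‖)
      (fun n => (hDi n).aestronglyMeasurable) hhi.norm (fun n => ae_of_all _ (hDb n))
      (ae_of_all _ fun s => ?_)
    exact (tendsto_negPartDeriv _ _).const_mul _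
  refine ge_of_tendsto' hlim fun n => ?_
  have hn : (0 : ℝ) < (n : ℝ) + 1 := by positivity
  have e : ∀ s, integrand (c s) (φ s) (y s + 1 / ((n : ℝ) + 1) * h s) =
      integrand (c s) (φ s) (y s) + 1 / ((n : ℝ) + 1) * (h s + φ s * D n s) := fun s => by
    simp only [integrand, D]
    rw [show y s + 1 / ((n : ℝ) + 1) * h s + c s = y s + c s + 1 / ((n : ℝ) + 1) * h s by ring]
    field_simp
    ring
  have hsi : Integrable (fun s => h s + φ s * D n s) P := hh1.add (hDi n)
  have h1 := hmin n (by simp only [e]; exact hyi.add (hsi.const_mul _))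
  simp only [e] at h1
  rw [integral_add hyi (hsi.const_mul _), integral_const_mul, integral_add hh1 (hDi n)] at h1
  have h2 : 0 ≤ 1 / ((n : ℝ) + 1) * (∫ s, h s ∂P + ∫ s, φ s * D n s ∂P) := by linarith
  have := nonneg_of_mul_nonneg_right h2 (by positivity)
  linarith

section Dual

variable {ι : Type*} [Fintype ι] {S : ι → Type*} [∀ t, MeasurableSpace (S t)]

/-- A minimizer of the relaxed dual problem has a feasible transport density satisfying the
complementary slackness conditions. The functional `h ↦ -∫ h ∂μ` on sums of functions of single
coordinates in `L²(φ μ)` is extended to a subgradient at the minimizer. -/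
lemma exists_dual (μt : ∀ t, Measure (S t)) [∀ t, IsProbabilityMeasure (μt t)]
    {c φ : (∀ t, S t) → ℝ} (hcm : Measurable c) (hφm : Measurable φ) (hφ1 : ∀ s, 1 ≤ φ s)
    (hφint : Integrable φ (Measure.pi μt))
    {x : ∀ t, S t → ℝ} (hx : ∀ t, Measurable (x t))
    (hxi : Integrable (fun s => integrand (c s) (φ s) (∑ t, x t (s t))) (Measure.pi μt))
    (hmin : ∀ x' : ∀ t, S t → ℝ, (∀ t, Measurable (x' t)) →
        Integrable (fun s => integrand (c s) (φ s) (∑ t, x' t (s t))) (Measure.pi μt) →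
        ∫ s, integrand (c s) (φ s) (∑ t, x t (s t)) ∂(Measure.pi μt) ≤
          ∫ s, integrand (c s) (φ s) (∑ t, x' t (s t)) ∂(Measure.pi μt)) :
    ∃ r : (∀ t, S t) → ℝ, Measurable r ∧ (∀ s, 0 ≤ r s ∧ r s ≤ φ s) ∧
      (∀ s, ∑ t, x t (s t) + c s < 0 → r s = φ s) ∧ (∀ s, 0 < ∑ t, x t (s t) + c s → r s = 0) ∧
      ∀ t, ((Measure.pi μt).withDensity fun s => ENNReal.ofReal (r s)).map (fun s => s t) =
        μt t := by
  classical
  set μ := Measure.pi μt with hμ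
  have hφ0 : ∀ s, 0 ≤ φ s := fun s => zero_le_one.trans (hφ1 s)
  have hym := measurable_sum hx
  have hwm : Measurable (fun s => ∑ t, x t (s t) + c s) := hym.add hcm
  set ν := μ.withDensity (fun s => ENNReal.ofReal (φ s)) with hν
  have : IsFiniteMeasure ν := isFiniteMeasure_withDensity_ofReal hφint.2
  have hνint : ∀ q : (∀ t, S t) → ℝ, ∫ s, q s ∂ν = ∫ s, φ s * q s ∂μ := fun q => by
    rw [hν, integral_withDensity_eq_integral_toReal_smul hφm.ennreal_ofReal
      (ae_of_all _ fun s => ENNReal.ofReal_lt_top)]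
    refine integral_congr_ae (ae_of_all _ fun s => ?_)
    simp [ENNReal.toReal_ofReal (hφ0 s)]
  have hνi : ∀ q : (∀ t, S t) → ℝ, Integrable q ν → Integrable (fun s => φ s * q s) μ :=
    fun q hq => by
      rw [hν, integrable_withDensity_iff_integrable_smul' hφm.ennreal_ofReal
        (ae_of_all _ fun s => ENNReal.ofReal_lt_top)] at hq
      refine hq.congr (ae_of_all _ fun s => ?_)
      simp [ENNReal.toReal_ofReal (hφ0 s)]
  let V : Submodule ℝ (Lp ℝ 2 ν) :=
    { carrier := {h | ∃ z : ∀ t, S t → ℝ, (∀ t, Measurable (z t)) ∧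
        h =ᵐ[ν] fun s => ∑ t, z t (s t)}
      add_mem' := by
        rintro a b ⟨za, hza, ha⟩ ⟨zb, hzb, hb⟩
        refine ⟨fun t q => za t q + zb t q, fun t => (hza t).add (hzb t), ?_⟩
        filter_upwards [ha, hb, Lp.coeFn_add a b] with s h1 h2 h3
        rw [h3, Pi.add_apply, h1, h2, Finset.sum_add_distrib]
      zero_mem' := by
        refine ⟨fun _ _ => 0, fun t => measurable_const, ?_⟩
        filter_upwards [Lp.coeFn_zero ℝ 2 ν] with s h1
        rw [h1]
        simp
      smul_mem' := by
        rintro k a ⟨za, hza, ha⟩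
        refine ⟨fun t q => k * za t q, fun t => (hza t).const_mul k, ?_⟩
        filter_upwards [ha, Lp.coeFn_smul k a] with s h1 h3
        rw [h3, Pi.smul_apply, h1, smul_eq_mul, Finset.mul_sum] }
  have hkL : MemLp (fun s => (φ s)⁻¹) 2 ν := MemLp.of_bound hφm.inv.aestronglyMeasurable 1
    (ae_of_all _ fun s => by
      rw [Real.norm_of_nonneg (inv_nonneg.2 (hφ0 s))]
      exact inv_le_one_of_one_le₀ (hφ1 s))
  let L : Lp ℝ 2 ν →ₗ[ℝ] ℝ := -(innerSL ℝ (hkL.toLp _)).toLinearMap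
  have hLh : ∀ h : Lp ℝ 2 ν, L h = -∫ s, h s ∂μ := fun h => by
    have e1 : L h = -inner ℝ (hkL.toLp _) h := rfl
    rw [e1, L2_inner_eq]
    congr 1
    rw [show ∫ s, (hkL.toLp _) s * h s ∂ν = ∫ s, (φ s)⁻¹ * h s ∂ν by
      refine integral_congr_ae ?_
      filter_upwards [hkL.coeFn_toLp] with s hs
      rw [hs], hνint]
    refine integral_congr_ae (ae_of_all _ fun s => ?_)
    have : φ s ≠ 0 := by linarith [hφ1 s]
    field_simp
  have hμν : ∀ p : (∀ t, S t) → Prop, (∀ᵐ s ∂ν, p s) → ∀ᵐ s ∂μ, p s := fun p hp => by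
    rw [hν, ae_withDensity_iff hφm.ennreal_ofReal] at hp
    filter_upwards [hp] with s hs
    refine hs ?_
    have := hφ1 s
    simp only [ne_eq, ENNReal.ofReal_eq_zero, not_le]
    linarith
  obtain ⟨g, hgm, hg01, hg1, hg0, hgV⟩ := exists_multiplier ν hwm V L (by
    rintro h ⟨z, hz, hhz⟩
    have hzm := measurable_sum hz
    have hzi : Integrable (fun s => ∑ t, z t (s t)) ν :=
      ((Lp.memLp h).integrable (by norm_num)).congr hhz
    have h1 := neg_integral_le_negPartDeriv (P := μ) hcm hφm hφ1 hym hzm (hνi _ hzi) hxi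
      (fun n hn => by
        have e : ∀ s : ∀ t, S t, ∑ t, x t (s t) + 1 / ((n : ℝ) + 1) * ∑ t, z t (s t) =
            ∑ t, (x t (s t) + 1 / ((n : ℝ) + 1) * z t (s t)) := fun s => by
          rw [Finset.sum_add_distrib, Finset.mul_sum]
        simp only [e] at hn ⊢
        exact hmin (fun t q => x t q + 1 / ((n : ℝ) + 1) * z t q)
          (fun t => (hx t).add ((hz t).const_mul _)) hn)
    rw [hLh, hνint]
    have hhz' : ∀ᵐ s ∂μ, h s = ∑ t, z t (s t) := hμν _ hhz
    rw [integral_congr_ae hhz']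
    refine h1.trans (le_of_eq (integral_congr_ae ?_))
    filter_upwards [hhz'] with s hs
    rw [hs])
  have hr0 : ∀ s, 0 ≤ g s * φ s := fun s => mul_nonneg (hg01 s).1 (hφ0 s)
  have hrm : Measurable (fun s => g s * φ s) := hgm.mul hφm
  have hri : Integrable (fun s => g s * φ s) μ :=
    hφint.bdd_mul (c := 1) hgm.aestronglyMeasurable (ae_of_all _ fun s => by
      rw [Real.norm_of_nonneg (hg01 s).1]
      exact (hg01 s).2)
  refine ⟨fun s => g s * φ s, hrm, fun s => ⟨hr0 s, mul_le_of_le_one_left (hφ0 s) (hg01 s).2⟩,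
    fun s hs => by simp only [hg1 s hs, one_mul], fun s hs => by simp only [hg0 s hs, zero_mul], fun t => ?_⟩
  ext A hA
  have hA' : MeasurableSet ((fun s : ∀ t, S t => s t) ⁻¹' A) := measurable_pi_apply t hA
  rw [Measure.map_apply (measurable_pi_apply t) hA, withDensity_apply _ hA',
    ← ofReal_integral_eq_lintegral_ofReal hri.integrableOn (ae_of_all _ hr0)]
  have hcoe := indicatorConstLp_coeFn (p := 2) (hs := hA') (hμs := measure_ne_top ν _) (c := (1 : ℝ))
  set h := indicatorConstLp 2 hA' (measure_ne_top ν _) (1 : ℝ) with hh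
  have hV : h ∈ V := by
    refine ⟨Pi.single t (A.indicator fun _ => 1), fun j => ?_, ?_⟩
    · rcases eq_or_ne j t with rfl | hj
      · rw [Pi.single_eq_same]
        exact measurable_const.indicator hA
      · rw [Pi.single_eq_of_ne hj]
        exact measurable_zero
    · filter_upwards [hcoe] with s hs
      rw [hs, Finset.sum_eq_single t, Pi.single_eq_same]
      · rfl
      · intro j _ hj
        rw [Pi.single_eq_of_ne hj]
        rfl
      · simp
  have h1 := hgV h hV
  have hcoe' := hμν _ hcoe
  rw [hLh, hνint, neg_inj, integral_congr_ae hcoe', integral_indicator hA'] at h1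
  have e2 : ∫ s, φ s * (g s * h s) ∂μ = ∫ s in (fun s : ∀ t, S t => s t) ⁻¹' A, g s * φ s ∂μ := by
    rw [← integral_indicator hA']
    refine integral_congr_ae ?_
    filter_upwards [hcoe'] with s hs
    rw [hs]
    by_cases hsA : s ∈ (fun s : ∀ t, S t => s t) ⁻¹' A
    · simp only [indicator_of_mem hsA]; ring
    · simp only [indicator_of_notMem hsA]; ring
  rw [← e2, ← h1]
  simp only [integral_const, smul_eq_mul, mul_one, measureReal_restrict_apply_univ]
  rw [ofReal_measureReal]
  exact (measurePreserving_eval μt t).measure_preimage hA.nullMeasurableSet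

end Dual

/-! ### Weak duality and complementary slackness -/

section Duality

variable {ι : Type*} [Fintype ι] {S : ι → Type*} [∀ t, MeasurableSpace (S t)]

lemma integral_sum_of_marginals {μt : ∀ t, Measure (S t)} {Q : Measure (∀ t, S t)}
    (hQ : ∀ t, Q.map (fun s => s t) = μt t) {x : ∀ t, S t → ℝ}
    (hxi : ∀ t, Integrable (x t) (μt t)) :
    Integrable (fun s => ∑ t, x t (s t)) Q ∧
      ∫ s, ∑ t, x t (s t) ∂Q = ∑ t, ∫ a, x t a ∂μt t := by
  have hmp : ∀ t, MeasurePreserving (fun s : ∀ t, S t => s t) Q (μt t) := fun t =>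
    ⟨measurable_pi_apply t, hQ t⟩
  have hi : ∀ t, Integrable (fun s : ∀ t, S t => x t (s t)) Q := fun t =>
    (hmp t).integrable_comp_of_integrable (hxi t)
  refine ⟨integrable_finsetSum _ fun t _ => hi t, ?_⟩
  rw [integral_finsetSum _ fun t _ => hi t]
  refine Finset.sum_congr rfl fun t _ => ?_
  have h := hxi t
  rw [← hQ t] at h ⊢
  exact (integral_map (measurable_pi_apply t).aemeasurable h.aestronglyMeasurable).symm

lemma slackness_nonneg {φ r w : ℝ} (hr : 0 ≤ r) (hrφ : r ≤ φ) :
    0 ≤ φ * max (-w) 0 + r * w := by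
  rcases le_total 0 w with h | h
  · rw [max_eq_right (by linarith)]
    nlinarith
  · rw [max_eq_left (by linarith)]
    nlinarith

lemma slackness_eq_zero_iff {φ r w : ℝ} :
    φ * max (-w) 0 + r * w = 0 ↔ (0 < w → r = 0) ∧ (w < 0 → r = φ) := by
  rcases lt_trichotomy w 0 with h | h | h
  · rw [max_eq_left (by linarith)]
    simp only [h, h.not_gt, false_imp_iff, true_imp_iff, true_and]
    rw [show φ * -w + r * w = (r - φ) * w by ring, mul_eq_zero, or_iff_left h.ne, sub_eq_zero]
  · subst h
    simp
  · rw [max_eq_right (by linarith)]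
    simp [h, h.ne', h.not_gt]

lemma withDensity_real {Ω : Type*} [MeasurableSpace Ω] {P : Measure Ω} {r : Ω → ℝ}
    (hr : Measurable r) (hr0 : ∀ s, 0 ≤ r s) (q : Ω → ℝ) :
    (Integrable q (P.withDensity fun s => ENNReal.ofReal (r s)) ↔
      Integrable (fun s => r s * q s) P) ∧
    ∫ s, q s ∂(P.withDensity fun s => ENNReal.ofReal (r s)) = ∫ s, r s * q s ∂P := by
  have htop : ∀ᵐ s ∂P, ENNReal.ofReal (r s) < ⊤ := ae_of_all _ fun s => ENNReal.ofReal_lt_top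
  rw [integral_withDensity_eq_integral_toReal_smul hr.ennreal_ofReal htop,
    integrable_withDensity_iff_integrable_smul' hr.ennreal_ofReal htop]
  simp only [ENNReal.toReal_ofReal (hr0 _), smul_eq_mul, and_self]

variable (μt : ∀ t, Measure (S t)) [∀ t, IsProbabilityMeasure (μt t)]
    {c φ r : (∀ t, S t) → ℝ} {v : ℝ} {x : ∀ t, S t → ℝ}

/-- Weak duality, with complementary slackness as the case of equality. -/
lemma weak_duality (hcint : Integrable c (Measure.pi μt)) (hv : 1 < v) (hφv : ∀ s, v ≤ φ s)
    (hrm : Measurable r) (hr0 : ∀ s, 0 ≤ r s) (hrφ : ∀ᵐ s ∂(Measure.pi μt), r s ≤ φ s)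
    (hmarg : ∀ t, ((Measure.pi μt).withDensity fun s => ENNReal.ofReal (r s)).map
      (fun s => s t) = μt t)
    (hx : ∀ t, Measurable (x t))
    (hxi : Integrable (fun s => integrand (c s) (φ s) (∑ t, x t (s t))) (Measure.pi μt))
    (hci : Integrable c ((Measure.pi μt).withDensity fun s => ENNReal.ofReal (r s))) :
    0 ≤ ∫ s, integrand (c s) (φ s) (∑ t, x t (s t)) ∂(Measure.pi μt) +
        ∫ s, c s ∂((Measure.pi μt).withDensity fun s => ENNReal.ofReal (r s)) ∧
      (∫ s, integrand (c s) (φ s) (∑ t, x t (s t)) ∂(Measure.pi μt) +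
        ∫ s, c s ∂((Measure.pi μt).withDensity fun s => ENNReal.ofReal (r s)) = 0 ↔
      ∀ᵐ s ∂(Measure.pi μt), (0 < ∑ t, x t (s t) + c s → r s = 0) ∧
        (∑ t, x t (s t) + c s < 0 → r s = φ s)) := by
  set μ := Measure.pi μt with hμ
  set lam := μ.withDensity fun s => ENNReal.ofReal (r s) with hlam
  have hyi : Integrable (fun s => ∑ t, x t (s t)) μ :=
    integrable_of_integrand hcint (measurable_sum hx) hv hφv hxi
  have hxt := integrable_of_sum μt hx hyi
  have h1 := integral_sum_of_marginals
    (fun t => (measurePreserving_eval μt t).map_eq) hxt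
  have h2 := integral_sum_of_marginals hmarg hxt
  have hwl : Integrable (fun s => ∑ t, x t (s t) + c s) lam := h2.1.add hci
  have h3 := withDensity_real (P := μ) hrm hr0 (fun s => ∑ t, x t (s t) + c s)
  have hrw := h3.1.1 hwl
  have hF : Integrable (fun s => φ s * max (-(∑ t, x t (s t) + c s)) 0) μ :=
    (hxi.sub hyi).congr (ae_of_all _ fun s => by simp [integrand])
  have hval : ∫ s, integrand (c s) (φ s) (∑ t, x t (s t)) ∂μ + ∫ s, c s ∂lam =
      ∫ s, (φ s * max (-(∑ t, x t (s t) + c s)) 0 + r s * (∑ t, x t (s t) + c s)) ∂μ := by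
    rw [integral_add hF hrw, ← h3.2, integral_add h2.1 hci, h2.2]
    simp only [integrand]
    rw [integral_add hyi hF, h1.2]
    ring
  have hnn : 0 ≤ᵐ[μ] fun s =>
      φ s * max (-(∑ t, x t (s t) + c s)) 0 + r s * (∑ t, x t (s t) + c s) := by
    filter_upwards [hrφ] with s hs
    exact slackness_nonneg (hr0 s) hs
  rw [hval]
  refine ⟨integral_nonneg_of_ae hnn, ?_⟩
  rw [integral_eq_zero_iff_of_nonneg_ae hnn (hF.add hrw)]
  refine eventually_congr (ae_of_all _ fun s => ?_)
  exact slackness_eq_zero_iff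

/-- Complementary slackness makes both objectives finite. -/
lemma integrable_of_slackness (hcm : Measurable c) (hφm : Measurable φ)
    (hc0 : ∀ s, 0 ≤ c s) (hcint : Integrable c (Measure.pi μt))
    (hv : 1 < v) (hφv : ∀ s, v ≤ φ s)
    (hrm : Measurable r) (hr0 : ∀ s, 0 ≤ r s)
    (hmarg : ∀ t, ((Measure.pi μt).withDensity fun s => ENNReal.ofReal (r s)).map
      (fun s => s t) = μt t)
    (hx : ∀ t, Measurable (x t))
    (hsl : ∀ᵐ s ∂(Measure.pi μt), (0 < ∑ t, x t (s t) + c s → r s = 0) ∧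
        (∑ t, x t (s t) + c s < 0 → r s = φ s)) :
    Integrable (fun s => integrand (c s) (φ s) (∑ t, x t (s t))) (Measure.pi μt) ∧
      Integrable c ((Measure.pi μt).withDensity fun s => ENNReal.ofReal (r s)) := by
  have hxt := integrable_of_slack μt hcm hc0 hcint hv hφv hrm.ennreal_ofReal rfl hmarg hx
    (by
      filter_upwards [hsl] with s hs h
      rw [hs.1 (by linarith), ENNReal.ofReal_zero])
    (by
      filter_upwards [hsl] with s hs h
      rw [hs.2 (by linarith)])
  set μ := Measure.pi μt with hμ
  have hyi := (integral_sum_of_marginals (fun t => (measurePreserving_eval μt t).map_eq) hxt).1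
  have hry := (withDensity_real (P := μ) hrm hr0 _).1.1 (integral_sum_of_marginals hmarg hxt).1
  have hFm := measurable_integrand hcm hφm (measurable_sum hx)
  -- on the slackness set, the sum of two nonnegative terms equals an integrable function
  have hsum : Integrable (fun s => (integrand (c s) (φ s) (∑ t, x t (s t)) + c s) + r s * c s) μ := by
    refine ((hyi.add hcint).sub hry).congr ?_
    filter_upwards [hsl] with s hs
    have := slackness_eq_zero_iff.2 hs
    simp only [Pi.sub_apply, Pi.add_apply, integrand]
    linarith
  have hF0 : ∀ s, 0 ≤ integrand (c s) (φ s) (∑ t, x t (s t)) + c s := fun s => by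
    linarith [integrand_lower' (c := c s) (y := ∑ t, x t (s t)) hv (hφv s)]
  have hrc0 : ∀ s, 0 ≤ r s * c s := fun s => mul_nonneg (hr0 s) (hc0 s)
  have hFc : Integrable (fun s => integrand (c s) (φ s) (∑ t, x t (s t)) + c s) μ :=
    hsum.mono' (hFm.add hcm).aestronglyMeasurable (ae_of_all _ fun s => by
      rw [Real.norm_of_nonneg (hF0 s)]
      linarith [hrc0 s])
  have hrc : Integrable (fun s => r s * c s) μ :=
    hsum.mono' (hrm.mul hcm).aestronglyMeasurable (ae_of_all _ fun s => by
      rw [Real.norm_of_nonneg (hrc0 s)]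
      linarith [hF0 s])
  exact ⟨(hFc.sub hcint).congr (ae_of_all _ fun s => by simp),
    (withDensity_real hrm hr0 c).1.2 hrc⟩

end Duality

end CapOT

/-- **Theorem (optimal transport with capacity constraints).**
Let `S_t` be Polish, `ψ_t : S_t → [1,∞)` continuous and `μ_t`-integrable, `μ_t` Borel
probability measures and `μ = ∏_t μ_t`.  Let `c, φ ≥ 0` be measurable and
`μ`-integrable with `c ≥ Kψ` for some `K ∈ ℝ` and `φ ≥ v` for some `v > 1`.  Then the
capacity-constrained transport problem (minimize `∫ c dλ` over `λ ≥ 0` with `λ ≪ μ`,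
`dλ/dμ ≤ φ` and marginals `μ_t`) and the relaxed dual problem (minimize
`∫ [∑ x_t + φ·(∑ x_t + c)⁻] dμ` over measurable `x`) are both attained, there is no
duality gap, feasible `λ` and `x` are optimal iff the complementary-slackness
conditions hold `μ`-a.e., and every feasible relaxed `x` has `x_t ∈ L¹(μ_t)`. -/
theorem stmt17
    {T : ℕ} (S : Fin (T + 1) → Type*)
    [∀ t, TopologicalSpace (S t)] [∀ t, PolishSpace (S t)]
    [∀ t, MeasurableSpace (S t)] [∀ t, BorelSpace (S t)]
    (ψt : ∀ t, S t → ℝ) (hψc : ∀ t, Continuous (ψt t)) (hψ1 : ∀ t st, 1 ≤ ψt t st)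
    (μt : ∀ t, Measure (S t)) [∀ t, IsProbabilityMeasure (μt t)]
    (hψint : ∀ t, Integrable (ψt t) (μt t))
    (μ : Measure (∀ t, S t)) (hμ : μ = Measure.pi μt)
    (c φ : (∀ t, S t) → ℝ)
    (hcm : Measurable c) (hφm : Measurable φ)
    (hc0 : ∀ s, 0 ≤ c s) (hφ0 : ∀ s, 0 ≤ φ s)
    (hcint : Integrable c μ) (hφint : Integrable φ μ)
    (K : ℝ) (hcK : ∀ s, K * (∑ t, ψt t (s t)) ≤ c s)
    (v : ℝ) (hv : 1 < v) (hφv : ∀ s, v ≤ φ s)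
    -- the capacity-constrained transport problem (cc):
    (FeasD : Set (Measure (∀ t, S t)))
    (hFeasD : FeasD = {lam | lam ≪ μ ∧
        (∀ᵐ s ∂μ, (lam.rnDeriv μ s).toReal ≤ φ s) ∧
        ∀ t, lam.map (fun s => s t) = μt t})
    (objD : Measure (∀ t, S t) → EReal)
    (hobjD : objD = fun lam => eInt lam fun s => ((c s : ℝ) : EReal))
    -- the relaxed dual problem (ccpr):
    (Φ : Set (∀ t, S t → ℝ)) (hΦ : Φ = {x | ∀ t, Measurable (x t)})
    (objP : (∀ t, S t → ℝ) → EReal)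
    (hobjP : objP = fun x => eInt μ fun s =>
      ((∑ t, x t (s t) + φ s * max (-(∑ t, x t (s t) + c s)) 0 : ℝ) : EReal)) :
    -- attainment in (cc)
    (∃ lam ∈ FeasD, objD lam = ⨅ lam' ∈ FeasD, objD lam') ∧
    -- attainment in (ccpr)
    (∃ x ∈ Φ, objP x = ⨅ x' ∈ Φ, objP x') ∧
    -- no duality gap
    (⨅ x ∈ Φ, objP x) = -(⨅ lam ∈ FeasD, objD lam) ∧
    -- complementary slackness optimality conditions
    (∀ lam ∈ FeasD, ∀ x ∈ Φ,
      ((objD lam = ⨅ lam' ∈ FeasD, objD lam' ∧ objP x = ⨅ x' ∈ Φ, objP x') ↔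
        (∀ᵐ s ∂μ,
          (-(∑ t, x t (s t)) < c s → (lam.rnDeriv μ s).toReal = 0) ∧
          (-(∑ t, x t (s t)) = c s →
            (lam.rnDeriv μ s).toReal ∈ Icc (0 : ℝ) (φ s)) ∧
          (c s < -(∑ t, x t (s t)) → (lam.rnDeriv μ s).toReal = φ s)))) ∧
    -- integrability of feasible relaxed solutions
    (∀ x ∈ Φ, objP x ≠ ⊤ → ∀ t, Integrable (x t) (μt t)) := by
  subst hμ hFeasD hobjD hΦ hobjP
  set μ := Measure.pi μt with hμ
  have hφ1 : ∀ s, 1 ≤ φ s := fun s => hv.le.trans (hφv s)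
  let F : (∀ t, S t → ℝ) → (∀ t, S t) → ℝ := fun x s =>
    CapOT.integrand (c s) (φ s) (∑ t, x t (s t))
  -- finite objective values are Bochner integrals, and all other values are `⊤`
  have hP1 : ∀ x : ∀ t, S t → ℝ, Integrable (F x) μ →
      (eInt μ fun s => ((∑ t, x t (s t) + φ s * max (-(∑ t, x t (s t) + c s)) 0 : ℝ) : EReal)) =
        ((∫ s, F x s ∂μ : ℝ) : EReal) := fun x hx => CapOT.eInt_of_integrable μ hx
  have hP2 : ∀ x : ∀ t, S t → ℝ, (∀ t, Measurable (x t)) → ¬ Integrable (F x) μ →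
      (eInt μ fun s => ((∑ t, x t (s t) + φ s * max (-(∑ t, x t (s t) + c s)) 0 : ℝ) : EReal)) =
        ⊤ := fun x hxm hx => CapOT.eInt_of_not_integrable μ
    (CapOT.measurable_integrand hcm hφm (CapOT.measurable_sum hxm)) hcint
    (fun s => CapOT.integrand_lower' hv (hφv s)) hx
  have hD2 : ∀ lam : Measure (∀ t, S t), ¬ Integrable c lam →
      (eInt lam fun s => ((c s : ℝ) : EReal)) = ⊤ := fun lam hlam =>
    CapOT.eInt_of_not_integrable lam hcm (integrable_zero _ ℝ lam)
      (fun s => by simpa using hc0 s) hlam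
  have hrep : ∀ lam : Measure (∀ t, S t), lam ≪ μ → (∀ t, lam.map (fun s => s t) = μt t) →
      ∃ r : (∀ t, S t) → ℝ, Measurable r ∧ (∀ s, 0 ≤ r s) ∧
        lam = μ.withDensity (fun s => ENNReal.ofReal (r s)) ∧
        ∀ s, (lam.rnDeriv μ s).toReal = r s := by
    intro lam hac hmarg
    have : IsProbabilityMeasure lam := ⟨by
      have h := measure_univ (μ := μt 0)
      rwa [← hmarg 0, Measure.map_apply (measurable_pi_apply 0) MeasurableSet.univ] at h⟩
    refine ⟨fun s => (lam.rnDeriv μ s).toReal, (Measure.measurable_rnDeriv lam μ).ennreal_toReal,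
      fun s => ENNReal.toReal_nonneg, ?_, fun s => rfl⟩
    conv_lhs => rw [← Measure.withDensity_rnDeriv_eq lam μ hac]
    refine withDensity_congr_ae ?_
    filter_upwards [Measure.rnDeriv_lt_top lam μ] with s hs
    rw [ENNReal.ofReal_toReal hs.ne]
  -- the stated slackness conditions in terms of the sign of `∑ x + c`
  have hSL : ∀ (x : ∀ t, S t → ℝ) (r : (∀ t, S t) → ℝ), (∀ s, 0 ≤ r s) →
      (∀ᵐ s ∂μ, r s ≤ φ s) →
      ((∀ᵐ s ∂μ, (-(∑ t, x t (s t)) < c s → r s = 0) ∧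
          (-(∑ t, x t (s t)) = c s → r s ∈ Icc (0 : ℝ) (φ s)) ∧
          (c s < -(∑ t, x t (s t)) → r s = φ s)) ↔
        ∀ᵐ s ∂μ, (0 < ∑ t, x t (s t) + c s → r s = 0) ∧
          (∑ t, x t (s t) + c s < 0 → r s = φ s)) := by
    intro x r hr0 hrφ
    constructor
    · intro h
      filter_upwards [h] with s hs
      exact ⟨fun h => hs.1 (by linarith), fun h => hs.2.2 (by linarith)⟩
    · intro h
      filter_upwards [h, hrφ] with s hs hφs
      exact ⟨fun h => hs.1 (by linarith), fun _ => ⟨hr0 s, hφs⟩, fun h => hs.2 (by linarith)⟩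
  obtain ⟨x₀, hx₀, hx₀i, hx₀min⟩ := CapOT.exists_minimizer μt hcm hφm hc0 hcint hv hφv
  obtain ⟨r₀, hr₀m, hr₀b, hr₀1, hr₀0, hr₀marg⟩ :=
    CapOT.exists_dual μt hcm hφm hφ1 hφint hx₀ hx₀i hx₀min
  have hsl₀ : ∀ᵐ s ∂μ, (0 < ∑ t, x₀ t (s t) + c s → r₀ s = 0) ∧
      (∑ t, x₀ t (s t) + c s < 0 → r₀ s = φ s) := ae_of_all _ fun s => ⟨hr₀0 s, hr₀1 s⟩
  have hci₀ := (CapOT.integrable_of_slackness μt hcm hφm hc0 hcint hv hφv hr₀m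
    (fun s => (hr₀b s).1) hr₀marg hx₀ hsl₀).2
  have hwd₀ := ((CapOT.weak_duality μt hcint hv hφv hr₀m (fun s => (hr₀b s).1)
    (ae_of_all _ fun s => (hr₀b s).2) hr₀marg hx₀ hx₀i hci₀).2).2 hsl₀
  set lam₀ := μ.withDensity fun s => ENNReal.ofReal (r₀ s) with hlam₀
  have hlam₀F : lam₀ ≪ μ ∧ (∀ᵐ s ∂μ, (lam₀.rnDeriv μ s).toReal ≤ φ s) ∧
      ∀ t, lam₀.map (fun s => s t) = μt t := by
    refine ⟨withDensity_absolutelyContinuous _ _, ?_, hr₀marg⟩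
    filter_upwards [Measure.rnDeriv_withDensity μ hr₀m.ennreal_ofReal] with s hs
    rw [hs, ENNReal.toReal_ofReal (hr₀b s).1]
    exact (hr₀b s).2
  set a := ∫ s, F x₀ s ∂μ with ha
  have hca : ∫ s, c s ∂lam₀ = -a := by linarith
  have hPmin : ∀ x : ∀ t, S t → ℝ, (∀ t, Measurable (x t)) → (a : EReal) ≤
      eInt μ fun s => ((∑ t, x t (s t) + φ s * max (-(∑ t, x t (s t) + c s)) 0 : ℝ) : EReal) := by
    intro x hx
    by_cases hxi : Integrable (F x) μ
    · rw [hP1 x hxi, EReal.coe_le_coe_iff]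
      exact hx₀min x hx hxi
    · rw [hP2 x hx hxi]
      exact le_top
  have hDmin : ∀ lam : Measure (∀ t, S t), (lam ≪ μ ∧
      (∀ᵐ s ∂μ, (lam.rnDeriv μ s).toReal ≤ φ s) ∧ ∀ t, lam.map (fun s => s t) = μt t) →
      ((-a : ℝ) : EReal) ≤ eInt lam fun s => ((c s : ℝ) : EReal) := by
    rintro lam ⟨hac, hle, hmarg⟩
    by_cases hci : Integrable c lam
    · rw [CapOT.eInt_of_integrable lam hci, EReal.coe_le_coe_iff]
      obtain ⟨r, hrm, hr0, hlam, hrr⟩ := hrep lam hac hmarg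
      simp only [hrr] at hle
      clear hrr
      subst hlam
      have h := (CapOT.weak_duality μt hcint hv hφv hrm hr0 hle hmarg hx₀ hx₀i hci).1
      linarith
    · rw [hD2 lam hci]
      exact le_top
  have hinfP : (⨅ x ∈ {x : ∀ t, S t → ℝ | ∀ t, Measurable (x t)}, eInt μ fun s =>
      ((∑ t, x t (s t) + φ s * max (-(∑ t, x t (s t) + c s)) 0 : ℝ) : EReal)) = (a : EReal) :=
    le_antisymm ((iInf₂_le x₀ hx₀).trans_eq (hP1 x₀ hx₀i)) (le_iInf₂ hPmin)
  have hD₀ : (eInt lam₀ fun s => ((c s : ℝ) : EReal)) = ((-a : ℝ) : EReal) := by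
    rw [CapOT.eInt_of_integrable lam₀ hci₀, hca]
  have hinfD : (⨅ lam ∈ {lam : Measure (∀ t, S t) | lam ≪ μ ∧
      (∀ᵐ s ∂μ, (lam.rnDeriv μ s).toReal ≤ φ s) ∧ ∀ t, lam.map (fun s => s t) = μt t},
      eInt lam fun s => ((c s : ℝ) : EReal)) = ((-a : ℝ) : EReal) :=
    le_antisymm ((iInf₂_le lam₀ hlam₀F).trans_eq hD₀) (le_iInf₂ hDmin)
  simp only [hinfP, hinfD]
  refine ⟨⟨lam₀, hlam₀F, hD₀⟩, ⟨x₀, hx₀, hP1 x₀ hx₀i⟩, ?_, ?_, ?_⟩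
  · rw [← EReal.coe_neg, neg_neg]
  · rintro lam hlamF x hx
    have hDm := hDmin lam hlamF
    have hPm := hPmin x hx
    obtain ⟨hac, hle, hmarg⟩ := hlamF
    obtain ⟨r, hrm, hr0, hlam, hrr⟩ := hrep lam hac hmarg
    simp only [hrr] at hle ⊢
    clear hrr
    subst hlam
    rw [hSL x r hr0 hle]
    constructor
    · rintro ⟨h1, h2⟩
      have hxi : Integrable (F x) μ := by
        by_contra hcon
        rw [hP2 x hx hcon] at h2
        exact EReal.coe_ne_top a h2.symm
      have hci : Integrable c (μ.withDensity fun s => ENNReal.ofReal (r s)) := by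
        by_contra hcon
        rw [hD2 _ hcon] at h1
        exact EReal.coe_ne_top (-a) h1.symm
      rw [hP1 x hxi, EReal.coe_eq_coe_iff] at h2
      rw [CapOT.eInt_of_integrable _ hci, EReal.coe_eq_coe_iff] at h1
      refine (CapOT.weak_duality μt hcint hv hφv hrm hr0 hle hmarg hx hxi hci).2.1 ?_
      linarith
    · intro hsl
      obtain ⟨hxi, hci⟩ :=
        CapOT.integrable_of_slackness μt hcm hφm hc0 hcint hv hφv hrm hr0 hmarg hx hsl
      have h0 := (CapOT.weak_duality μt hcint hv hφv hrm hr0 hle hmarg hx hxi hci).2.2 hsl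
      rw [hP1 x hxi, EReal.coe_le_coe_iff] at hPm
      rw [CapOT.eInt_of_integrable _ hci, EReal.coe_le_coe_iff] at hDm
      rw [hP1 x hxi, CapOT.eInt_of_integrable _ hci, EReal.coe_eq_coe_iff, EReal.coe_eq_coe_iff]
      constructor <;> linarith
  · intro x hx hne
    have hxi : Integrable (F x) μ := by
      by_contra hcon
      exact hne (hP2 x hx hcon)
    exact CapOT.integrable_of_sum μt hx
      (CapOT.integrable_of_integrand hcint (CapOT.measurable_sum hx) hv hφv hxi)

end
end

section
/- Let S be a Polish space and D : S ⇉ ℝ^d an inner semicontinuous set-valued mapping with nonempty closed convex values such that C_b(D) := {y ∈ C_b(S;ℝ^d) : y(s) ∈ D(s) for all s ∈ S} is nonempty. Then for every finite ℝ^d-valued Borel measure λ on S, sup_{y ∈ C_b(D)} ∫_S y dλ = ∫_S σ_{D(s)}( (dλ/d|λ|)(s) ) d|λ|(s), where σ_{D(s)}(v) = sup_{u ∈ D(s)} u·v is the support function of D(s) and |λ| the total variation of λ. -/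
/-!
Write `w` for the density of `λ` with respect to `tv`, the sum of the total variations of the
coordinates; only finiteness of `tv` and domination of each coordinate are needed. Since `y(s) · w(s) ≤ σ_{D(s)}(w(s))`
pointwise, the supremum is at most the integral of the support function; the negative part of the
latter is integrable because `C_b(D)` is nonempty.

For the converse, Michael's selection theorem (`exists_continuous_selection`), applied to `D`
intersected with balls over closed sets, yields countably many bounded continuous selections `Y n`
that are dense in every `D s` (`exists_dense_selections`). Hence the support function is the
increasing limit of the finite maxima `max_{k ≤ n} Y k · w`, and by monotone convergence
(`tendsto_integral_eInt_iSup`) it suffices to bound the integrals of these maxima. The maximum of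
`y · w` and `z · w` equals `(1_A y + 1_{Aᶜ} z) · w` for a Borel set `A`; replacing the indicator by
a continuous function with values in `[0, 1]` that is close to it in weighted `L¹` gives, by
convexity of the values of `D`, a bounded continuous selection whose integral is as close as
desired (`exists_selection_near_max`). Thus the `L¹`-closure of `{y · w : y ∈ C_b(D)}` is stable
under finite maxima (`max_mem_pairingClosure`).
-/

open MeasureTheory Filter Set
open scoped ENNReal

noncomputable section

open MeasureTheory Filter Set BoundedContinuousFunction
open scoped ENNReal

/-! ### Continuous selections -/

/-- Intersecting an inner semicontinuous mapping with an open ball around a continuous centre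
preserves inner semicontinuity. -/
lemma InnerSemicontinuous.inter_ball {X E : Type*} [TopologicalSpace X] [PseudoMetricSpace E]
    {T : X → Set E} (hT : InnerSemicontinuous T) {g : X → E} (hg : Continuous g) (r : ℝ) :
    InnerSemicontinuous (fun s => T s ∩ Metric.ball (g s) r) := by
  intro O hO
  rw [isOpen_iff_mem_nhds]
  rintro s₀ ⟨u, ⟨huT, hub⟩, huO⟩
  rw [Metric.mem_ball] at hub
  have hδ : 0 < (r - dist u (g s₀)) / 2 := by linarith
  set δ := (r - dist u (g s₀)) / 2 with hδdef
  have h1 : {s | (T s ∩ (Metric.ball u δ ∩ O)).Nonempty} ∈ nhds s₀ :=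
    (hT _ (Metric.isOpen_ball.inter hO)).mem_nhds ⟨u, huT, Metric.mem_ball_self hδ, huO⟩
  have h2 : ∀ᶠ s in nhds s₀, dist (g s) (g s₀) < δ :=
    hg.continuousAt.eventually (Metric.ball_mem_nhds _ hδ)
  filter_upwards [h1, h2] with s ⟨v, hvT, hvb, hvO⟩ hs
  refine ⟨v, ⟨hvT, ?_⟩, hvO⟩
  rw [Metric.mem_ball] at hvb ⊢
  have h3 := dist_triangle4 v u (g s₀) (g s)
  rw [dist_comm (g s₀)] at h3
  linarith

/-- Approximate continuous selections, from a partition of unity. -/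
lemma exists_approx_selection {X E : Type*} [TopologicalSpace X] [NormalSpace X]
    [ParacompactSpace X] [NormedAddCommGroup E] [NormedSpace ℝ E]
    {T : X → Set E} (hT : InnerSemicontinuous T) (hne : ∀ s, (T s).Nonempty)
    (hconv : ∀ s, Convex ℝ (T s)) {ε : ℝ} (hε : 0 < ε) :
    ∃ g : C(X, E), ∀ s, (T s ∩ Metric.ball (g s) ε).Nonempty := by
  obtain ⟨g, hg⟩ := exists_continuous_forall_mem_convex_of_local_const
    (t := fun s => Metric.thickening ε (T s)) (fun s => (hconv s).thickening ε) (by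
      intro s
      obtain ⟨u, hu⟩ := hne s
      refine ⟨u, ?_⟩
      filter_upwards [(hT _ (Metric.isOpen_ball (x := u) (ε := ε))).mem_nhds
        ⟨u, hu, Metric.mem_ball_self hε⟩] with t ⟨v, hv, hvb⟩
      rw [Metric.mem_thickening_iff]
      exact ⟨v, hv, by rwa [dist_comm]⟩)
  refine ⟨g, fun s => ?_⟩
  obtain ⟨v, hv, hvd⟩ := Metric.mem_thickening_iff.1 (hg s)
  exact ⟨v, hv, by rwa [Metric.mem_ball, dist_comm]⟩

/-- Michael's selection theorem, for convex values that need not be closed: the selection then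
takes its values in the closures. -/
lemma exists_continuous_selection {X E : Type*} [TopologicalSpace X] [NormalSpace X]
    [ParacompactSpace X] [NormedAddCommGroup E] [NormedSpace ℝ E] [CompleteSpace E]
    {T : X → Set E} (hT : InnerSemicontinuous T) (hne : ∀ s, (T s).Nonempty)
    (hconv : ∀ s, Convex ℝ (T s)) :
    ∃ g : C(X, E), ∀ s, g s ∈ closure (T s) := by
  have step : ∀ (n : ℕ) (g : {g : C(X, E) // ∀ s, (T s ∩ Metric.ball (g s) (1 / 2 ^ n)).Nonempty}),
      ∃ g' : {g : C(X, E) // ∀ s, (T s ∩ Metric.ball (g s) (1 / 2 ^ (n + 1))).Nonempty},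
        ∀ s, dist (g.1 s) (g'.1 s) ≤ 4 / 2 / 2 ^ n := by
    rintro n ⟨g, hg⟩
    obtain ⟨g', hg'⟩ := exists_approx_selection (hT.inter_ball g.continuous (1 / 2 ^ n)) hg
      (fun s => (hconv s).inter (convex_ball _ _)) (ε := 1 / 2 ^ (n + 1)) (by positivity)
    refine ⟨⟨g', fun s => (hg' s).mono ?_⟩, fun s => ?_⟩
    · exact inter_subset_inter_left _ inter_subset_left
    · obtain ⟨v, ⟨-, hv1⟩, hv2⟩ := hg' s
      rw [Metric.mem_ball] at hv1 hv2
      have h1 := dist_triangle_left (g s) (g' s) v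
      have h2 : (1 : ℝ) / 2 ^ (n + 1) ≤ 1 / 2 ^ n := by
        gcongr
        · norm_num
        · omega
      have h3 : (4 : ℝ) / 2 / 2 ^ n = 1 / 2 ^ n + 1 / 2 ^ n := by ring
      change dist (g s) (g' s) ≤ _
      linarith
  choose next hnext using step
  obtain ⟨g₀, hg₀⟩ := exists_approx_selection hT hne hconv (ε := 1 / 2 ^ 0) (by positivity)
  let G : ∀ n : ℕ, {g : C(X, E) // ∀ s, (T s ∩ Metric.ball (g s) (1 / 2 ^ n)).Nonempty} :=
    fun n => Nat.rec ⟨g₀, hg₀⟩ (fun n g => next n g) n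
  have hG : ∀ s n, dist ((G n).1 s) ((G (n + 1)).1 s) ≤ 4 / 2 / 2 ^ n :=
    fun s n => hnext n (G n) s
  have hlim : ∀ s, ∃ a, Tendsto (fun n => (G n).1 s) atTop (nhds a) := fun s =>
    cauchySeq_tendsto_of_complete (cauchySeq_of_le_geometric_two (hG s))
  choose f hf using hlim
  have hd : ∀ s n, dist ((G n).1 s) (f s) ≤ 4 / 2 ^ n := fun s n =>
    dist_le_of_le_geometric_two_of_tendsto (hG s) (hf s) n
  have hz : ∀ c : ℝ, Tendsto (fun n : ℕ => c / 2 ^ n) atTop (nhds 0) := fun c =>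
    tendsto_const_nhds.div_atTop (tendsto_pow_atTop_atTop_of_one_lt (by norm_num))
  have hfc : Continuous f := by
    refine TendstoUniformly.continuous (F := fun n => ⇑(G n).1) (p := atTop) ?_
      (Frequently.of_forall fun n => (G n).1.continuous)
    rw [Metric.tendstoUniformly_iff]
    intro ε hε
    filter_upwards [(hz 4).eventually (gt_mem_nhds hε)] with n hn s
    rw [dist_comm]
    exact (hd s n).trans_lt hn
  refine ⟨⟨f, hfc⟩, fun s => Metric.mem_closure_iff.2 fun ε hε => ?_⟩
  obtain ⟨n, hn⟩ := ((hz 5).eventually (gt_mem_nhds hε)).exists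
  obtain ⟨v, hv, hvb⟩ := (G n).2 s
  refine ⟨v, hv, ?_⟩
  rw [Metric.mem_ball, dist_comm] at hvb
  have h1 := dist_triangle_left (f s) v ((G n).1 s)
  have h2 : (5 : ℝ) / 2 ^ n = 4 / 2 ^ n + 1 / 2 ^ n := by ring
  change dist (f s) v < ε
  linarith [hd s n]

/-- A bounded continuous selection taking values near `q` on a closed set `C` on which `D` meets
`ball q r`: select from `D ∩ ball q r` on `C` and from `D ∩ ball 0 R` elsewhere, with `R` so large
that the latter is nonempty and contains the former. -/
lemma exists_bounded_selection {X E : Type*} [TopologicalSpace X] [NormalSpace X]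
    [ParacompactSpace X] [NormedAddCommGroup E] [NormedSpace ℝ E] [CompleteSpace E]
    {D : X → Set E} (hD : InnerSemicontinuous D) (hclosed : ∀ s, IsClosed (D s))
    (hconv : ∀ s, Convex ℝ (D s)) (y₀ : X →ᵇ E) (hy₀ : ∀ s, y₀ s ∈ D s)
    (q : E) {r : ℝ} (hr : 0 < r) {C : Set X} (hC : IsClosed C)
    (hCD : ∀ s ∈ C, (D s ∩ Metric.ball q r).Nonempty) :
    ∃ y : X →ᵇ E, (∀ s, y s ∈ D s) ∧ ∀ s ∈ C, y s ∈ Metric.closedBall q r := by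
  classical
  set R := ‖y₀‖ + ‖q‖ + r + 1 with hR
  have hsub : Metric.ball q r ⊆ Metric.ball (0 : E) R := by
    apply Metric.ball_subset_ball'
    rw [dist_zero_right]
    linarith [norm_nonneg y₀]
  let T : X → Set E := fun s =>
    if s ∈ C then D s ∩ Metric.ball q r else D s ∩ Metric.ball 0 R
  have hTsub : ∀ s, T s ⊆ D s ∩ Metric.ball 0 R := by
    intro s
    by_cases hs : s ∈ C
    · simpa only [T, if_pos hs] using inter_subset_inter_right _ hsub
    · simp only [T, if_neg hs, subset_refl]
  have hTball : ∀ s, D s ∩ Metric.ball q r ⊆ T s := by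
    intro s
    by_cases hs : s ∈ C
    · simp only [T, if_pos hs, subset_refl]
    · simpa only [T, if_neg hs] using inter_subset_inter_right _ hsub
  have hT : InnerSemicontinuous T := by
    intro O hO
    have : {s | (T s ∩ O).Nonempty} =
        (Cᶜ ∩ {s | (D s ∩ (Metric.ball 0 R ∩ O)).Nonempty}) ∪
          {s | (D s ∩ (Metric.ball q r ∩ O)).Nonempty} := by
      ext s
      simp only [mem_ofPred_eq, mem_union, mem_inter_iff, mem_compl_iff, ← inter_assoc]
      constructor
      · intro h
        by_cases hs : s ∈ C
        · right
          simpa only [T, if_pos hs] using h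
        · left
          refine ⟨hs, ?_⟩
          simpa only [T, if_neg hs] using h
      · rintro (⟨hs, h⟩ | h)
        · simpa only [T, if_neg hs] using h
        · exact h.mono (inter_subset_inter_left _ (hTball s))
    rw [this]
    exact (hC.isOpen_compl.inter (hD _ (Metric.isOpen_ball.inter hO))).union
      (hD _ (Metric.isOpen_ball.inter hO))
  have hTne : ∀ s, (T s).Nonempty := by
    intro s
    by_cases hs : s ∈ C
    · simpa only [T, if_pos hs] using hCD s hs
    · simp only [T, if_neg hs]
      refine ⟨y₀ s, hy₀ s, ?_⟩
      rw [mem_ball_zero_iff]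
      linarith [y₀.norm_coe_le_norm s, norm_nonneg q]
  have hTconv : ∀ s, Convex ℝ (T s) := by
    intro s
    by_cases hs : s ∈ C
    · simpa only [T, if_pos hs] using (hconv s).inter (convex_ball _ _)
    · simpa only [T, if_neg hs] using (hconv s).inter (convex_ball _ _)
  obtain ⟨g, hg⟩ := exists_continuous_selection hT hTne hTconv
  refine ⟨BoundedContinuousFunction.ofNormedAddCommGroup g g.continuous R ?_, ?_, ?_⟩
  · intro s
    have := closure_mono ((hTsub s).trans inter_subset_right) (hg s)
    simpa using Metric.closure_ball_subset_closedBall this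
  · intro s
    exact closure_minimal ((hTsub s).trans inter_subset_left) (hclosed s) (hg s)
  · intro s hs
    have h1 : T s ⊆ Metric.ball q r := by
      simp only [T, if_pos hs, inter_subset_right]
    exact Metric.closure_ball_subset_closedBall (closure_mono h1 (hg s))

/-- A Castaing representation by bounded continuous selections: countably many of them are
dense in each value `D s`. -/
lemma exists_dense_selections {X E : Type*} [TopologicalSpace X] [TopologicalSpace.MetrizableSpace X]
    [NormedAddCommGroup E] [NormedSpace ℝ E] [CompleteSpace E] [TopologicalSpace.SeparableSpace E]
    {D : X → Set E} (hD : InnerSemicontinuous D) (hclosed : ∀ s, IsClosed (D s))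
    (hconv : ∀ s, Convex ℝ (D s)) (y₀ : X →ᵇ E) (hy₀ : ∀ s, y₀ s ∈ D s) :
    ∃ Y : ℕ → X →ᵇ E, (∀ n s, Y n s ∈ D s) ∧
      ∀ s, ∀ u ∈ D s, ∀ ε > 0, ∃ n, dist (Y n s) u < ε := by
  let _ := TopologicalSpace.metrizableSpaceMetric X
  let q := TopologicalSpace.denseSeq E
  let r : ℕ → ℝ := fun k => 1 / ((k : ℝ) + 1)
  have hr : ∀ k, 0 < r k := fun k => Nat.one_div_pos_of_nat
  have hU : ∀ j k, IsOpen {s | (D s ∩ Metric.ball (q j) (r k)).Nonempty} := fun j k =>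
    hD _ Metric.isOpen_ball
  choose C hCc hCs hCu _ using fun j k => (hU j k).exists_iUnion_isClosed
  have key : ∀ p : ℕ × ℕ × ℕ, ∃ y : X →ᵇ E, (∀ s, y s ∈ D s) ∧
      ∀ s ∈ C p.1 p.2.1 p.2.2, y s ∈ Metric.closedBall (q p.1) (r p.2.1) := fun p =>
    exists_bounded_selection hD hclosed hconv y₀ hy₀ (q p.1) (hr p.2.1) (hCc p.1 p.2.1 p.2.2)
      (fun s hs => hCs _ _ _ hs)
  choose Y hYD hYq using key
  obtain ⟨e, he⟩ := exists_surjective_nat (ℕ × ℕ × ℕ)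
  refine ⟨fun n => Y (e n), fun n s => hYD _ s, fun s u hu ε hε => ?_⟩
  obtain ⟨k, hk⟩ := exists_nat_one_div_lt (half_pos hε)
  obtain ⟨j, hj⟩ := (TopologicalSpace.denseRange_denseSeq E).exists_dist_lt u (hr k)
  have hs : s ∈ ⋃ m, C j k m := by
    rw [hCu]
    exact ⟨u, hu, hj⟩
  obtain ⟨m, hm⟩ := mem_iUnion.1 hs
  obtain ⟨n, hn⟩ := he (j, k, m)
  refine ⟨n, ?_⟩
  have h1 := hYq (j, k, m) s hm
  rw [Metric.mem_closedBall] at h1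
  have h2 := dist_triangle_right (Y (j, k, m) s) u (q j)
  have h3 : r k < ε / 2 := hk
  change dist (Y (e n) s) u < ε
  rw [hn]
  change dist u (q j) < r k at hj
  change dist (Y (j, k, m) s) (q j) ≤ r k at h1
  linarith

/-! ### The integral of extended-real-valued functions -/

/-- When the negative part is integrable, the case distinction in `eInt` is immaterial. -/
lemma eInt_eq_sub {X : Type*} [MeasurableSpace X] {μ : Measure X} {f : X → EReal}
    (hN : ∫⁻ s, (-(f s)).toENNReal ∂μ ≠ ⊤) :
    eInt μ f = ((∫⁻ s, (f s).toENNReal ∂μ : ℝ≥0∞) : EReal) -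
      ((∫⁻ s, (-(f s)).toENNReal ∂μ : ℝ≥0∞) : EReal) := by
  -- `EReal.posPart'` and `EReal.toENNReal` agree definitionally.
  change (if (∫⁻ s, (f s).toENNReal ∂μ) = ⊤ then ⊤
    else ((∫⁻ s, (f s).toENNReal ∂μ : ℝ≥0∞) : EReal) -
      ((∫⁻ s, (-(f s)).toENNReal ∂μ : ℝ≥0∞) : EReal)) = _
  split_ifs with h
  · rw [h]
    lift (∫⁻ s, (-(f s)).toENNReal ∂μ) to NNReal using hN with N
    rfl
  · rfl

lemma lintegral_neg_toENNReal_ne_top {X : Type*} [MeasurableSpace X] {μ : Measure X} {g : X → ℝ}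
    (hg : Integrable g μ) {f : X → EReal} (hgf : ∀ s, (g s : EReal) ≤ f s) :
    ∫⁻ s, (-(f s)).toENNReal ∂μ ≠ ⊤ := by
  refine ne_top_of_le_ne_top hg.neg.lintegral_lt_top.ne (lintegral_mono fun s => ?_)
  exact EReal.toENNReal_le_toENNReal (EReal.neg_le_neg_iff.2 (hgf s))

lemma eInt_coe {X : Type*} [MeasurableSpace X] {μ : Measure X} {g : X → ℝ}
    (hg : Integrable g μ) : eInt μ (fun s => (g s : EReal)) = ((∫ s, g s ∂μ : ℝ) : EReal) := by
  have hP : ∫⁻ s, ENNReal.ofReal (g s) ∂μ ≠ ⊤ := hg.lintegral_lt_top.ne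
  have hN : ∫⁻ s, ENNReal.ofReal (-g s) ∂μ ≠ ⊤ := hg.neg.lintegral_lt_top.ne
  rw [eInt_eq_sub (lintegral_neg_toENNReal_ne_top hg fun s => le_rfl),
    integral_eq_lintegral_pos_part_sub_lintegral_neg_part hg, EReal.coe_sub,
    EReal.coe_ennreal_toReal hP, EReal.coe_ennreal_toReal hN]
  rfl

/-- Monotone convergence for `eInt`: the positive parts increase, and the negative parts are
dominated by that of the first function. -/
lemma tendsto_integral_eInt_iSup {X : Type*} [MeasurableSpace X] {μ : Measure X} {g : ℕ → X → ℝ}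
    (hg : ∀ n, Integrable (g n) μ) (hmono : ∀ s, Monotone fun n => g n s) :
    Tendsto (fun n => ((∫ s, g n s ∂μ : ℝ) : EReal)) atTop
      (nhds (eInt μ fun s => ⨆ n, (g n s : EReal))) := by
  have hmono' : ∀ s, Monotone fun n => (g n s : EReal) := fun s m n h =>
    EReal.coe_le_coe_iff.2 (hmono s h)
  have hlim : ∀ s, Tendsto (fun n => (g n s : EReal)) atTop (nhds (⨆ n, (g n s : EReal))) :=
    fun s => tendsto_atTop_iSup (hmono' s)
  have hN := lintegral_neg_toENNReal_ne_top (hg 0)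
    (f := fun s => ⨆ n, (g n s : EReal)) (fun s => le_iSup (fun n => (g n s : EReal)) 0)
  have hPt : Tendsto (fun n => ∫⁻ s, (g n s : EReal).toENNReal ∂μ) atTop
      (nhds (∫⁻ s, (⨆ n, (g n s : EReal)).toENNReal ∂μ)) := by
    refine lintegral_tendsto_of_tendsto_of_monotone (fun n => ?_) (.of_forall fun s m n h => ?_)
      (.of_forall fun s => ?_)
    · exact (hg n).aemeasurable.ennreal_ofReal
    · exact EReal.toENNReal_le_toENNReal (hmono' s h)
    · exact (EReal.continuous_toENNReal.tendsto _).comp (hlim s)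
  have hNt : Tendsto (fun n => ∫⁻ s, (-(g n s : EReal)).toENNReal ∂μ) atTop
      (nhds (∫⁻ s, (-(⨆ n, (g n s : EReal))).toENNReal ∂μ)) := by
    refine tendsto_lintegral_of_dominated_convergence' (fun s => (-(g 0 s : EReal)).toENNReal)
      (fun n => ?_) (fun n => .of_forall fun s => ?_) ?_ (.of_forall fun s => ?_)
    · exact (hg n).neg.aemeasurable.ennreal_ofReal
    · exact EReal.toENNReal_le_toENNReal (EReal.neg_le_neg_iff.2 (hmono' s (Nat.zero_le n)))
    · exact lintegral_neg_toENNReal_ne_top (hg 0) fun s => le_rfl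
    · exact (EReal.continuous_toENNReal.tendsto _).comp ((hlim s).neg)
  rw [eInt_eq_sub hN]
  have hadd := EReal.continuousAt_add
    (p := (((∫⁻ s, (⨆ n, (g n s : EReal)).toENNReal ∂μ : ℝ≥0∞) : EReal),
      -((∫⁻ s, (-(⨆ n, (g n s : EReal))).toENNReal ∂μ : ℝ≥0∞) : EReal)))
    (Or.inr (by simpa using hN)) (Or.inl (EReal.coe_ennreal_ne_bot _))
  have hfin := hadd.tendsto.comp
    (((continuous_coe_ennreal_ereal.tendsto _).comp hPt).prodMk_nhds
      ((continuous_coe_ennreal_ereal.tendsto _).comp hNt).neg)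
  refine hfin.congr fun n => ?_
  rw [← eInt_coe (hg n), eInt_eq_sub (lintegral_neg_toENNReal_ne_top (hg n) fun s => le_rfl)]
  rfl

lemma integral_le_eInt {X : Type*} [MeasurableSpace X] {μ : Measure X} {g : X → ℝ}
    (hg : Integrable g μ) {f : X → EReal} (hgf : ∀ s, (g s : EReal) ≤ f s) :
    ((∫ s, g s ∂μ : ℝ) : EReal) ≤ eInt μ f := by
  rw [← eInt_coe hg, eInt_eq_sub (lintegral_neg_toENNReal_ne_top hg hgf),
    eInt_eq_sub (lintegral_neg_toENNReal_ne_top hg fun s => le_rfl)]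
  refine EReal.sub_le_sub ?_ ?_
  · exact EReal.coe_ennreal_le_coe_ennreal_iff.2
      (lintegral_mono fun s => EReal.toENNReal_le_toENNReal (hgf s))
  · exact EReal.coe_ennreal_le_coe_ennreal_iff.2
      (lintegral_mono fun s => EReal.toENNReal_le_toENNReal (EReal.neg_le_neg_iff.2 (hgf s)))

/-! ### Densities -/

/-- For `m ≪ μ`, integration against `m` is integration against `μ` with the density of `m`. -/
lemma sInt_eq_integral_mul_rnDeriv {X : Type*} [TopologicalSpace X] [MeasurableSpace X]
    [BorelSpace X] (m : SignedMeasure X) (μ : Measure X) [IsFiniteMeasure μ]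
    (hm : m.totalVariation ≤ μ) {f : X → ℝ} (hf : Continuous f) {C : ℝ} (hC : ∀ s, ‖f s‖ ≤ C) :
    sInt m f = ∫ s, f s * m.rnDeriv μ s ∂μ := by
  have hpos : m.toJordanDecomposition.posPart ≪ μ :=
    Measure.absolutelyContinuous_of_le ((Measure.le_add_right le_rfl).trans hm)
  have hneg : m.toJordanDecomposition.negPart ≪ μ :=
    Measure.absolutelyContinuous_of_le ((Measure.le_add_left le_rfl).trans hm)
  have hint : ∀ ν : Measure X, IsFiniteMeasure ν → Integrable f ν := fun ν _ =>
    .of_bound hf.measurable.aestronglyMeasurable C (.of_forall hC)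
  have h1 := (integrable_rnDeriv_smul_iff hpos).2 (hint _ inferInstance)
  have h2 := (integrable_rnDeriv_smul_iff hneg).2 (hint _ inferInstance)
  rw [sInt, ← integral_rnDeriv_smul hpos, ← integral_rnDeriv_smul hneg, ← integral_sub h1 h2]
  refine integral_congr_ae (.of_forall fun s => ?_)
  simp only [SignedMeasure.rnDeriv, smul_eq_mul]
  ring

/-! ### Pasting continuous selections -/

/-- The pairing `y · w` of a bounded continuous function with a density. -/
def pairing {S : Type*} [TopologicalSpace S] {d : ℕ} (w : S → Fin d → ℝ)
    (y : S →ᵇ (Fin d → ℝ)) (s : S) : ℝ :=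
  ∑ i, y s i * w s i

lemma integrable_coord_mul {S : Type*} [TopologicalSpace S] [MeasurableSpace S] [BorelSpace S]
    {d : ℕ} {w : S → Fin d → ℝ} {μ : Measure S} (hw : ∀ i, Integrable (fun s => w s i) μ)
    (y : S →ᵇ (Fin d → ℝ)) (i : Fin d) : Integrable (fun s => y s i * w s i) μ :=
  (hw i).bdd_mul ((continuous_apply i).comp y.continuous).measurable.aestronglyMeasurable
    (.of_forall fun s => (norm_le_pi_norm (y s) i).trans (y.norm_coe_le_norm s))

lemma integrable_pairing {S : Type*} [TopologicalSpace S] [MeasurableSpace S] [BorelSpace S]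
    {d : ℕ} {w : S → Fin d → ℝ} {μ : Measure S} (hw : ∀ i, Integrable (fun s => w s i) μ)
    (y : S →ᵇ (Fin d → ℝ)) : Integrable (pairing w y) μ :=
  integrable_finsetSum _ fun i _ => integrable_coord_mul hw y i

lemma measurable_pairing {S : Type*} [TopologicalSpace S] [MeasurableSpace S] [BorelSpace S]
    {d : ℕ} {w : S → Fin d → ℝ} (hw : ∀ i, Measurable fun s => w s i)
    (y : S →ᵇ (Fin d → ℝ)) : Measurable (pairing w y) :=
  Finset.measurable_fun_sum _ fun i _ =>
    ((continuous_apply i).comp y.continuous).measurable.mul (hw i)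

/-- Indicators can be approximated in weighted `L¹` by continuous functions with values
in `[0, 1]`. -/
lemma exists_continuous_approx_indicator {S : Type*} [TopologicalSpace S] [PolishSpace S]
    [MeasurableSpace S] [BorelSpace S] {μ : Measure S} {f : S → ℝ} (hfm : Measurable f)
    (hf : Integrable f μ) {A : Set S} (hA : MeasurableSet A) {ε : ℝ} (hε : 0 < ε) :
    ∃ φ : C(S, ℝ), (∀ s, 0 ≤ φ s ∧ φ s ≤ 1) ∧
      Integrable (fun s => |φ s - A.indicator 1 s| * |f s|) μ ∧
      ∫ s, |φ s - A.indicator 1 s| * |f s| ∂μ ≤ ε := by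
  set ν := μ.withDensity fun s => ENNReal.ofReal |f s| with hν
  have hνfin : IsFiniteMeasure ν := isFiniteMeasure_withDensity_ofReal hf.abs.2
  have hdm : Measurable fun s => ENNReal.ofReal |f s| := hfm.abs.ennreal_ofReal
  have hdt : ∀ᵐ s ∂μ, ENNReal.ofReal |f s| < ⊤ := .of_forall fun s => ENNReal.ofReal_lt_top
  have h1 : Integrable (A.indicator (1 : S → ℝ)) ν := (integrable_const (1 : ℝ)).indicator hA
  obtain ⟨ψ, hψ, hψi⟩ := h1.exists_boundedContinuous_integral_sub_le hε
  let φ : C(S, ℝ) := ⟨fun s => max 0 (min 1 (ψ s)), by fun_prop⟩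
  have hφ : ∀ s, 0 ≤ φ s ∧ φ s ≤ 1 := fun s =>
    ⟨le_max_left _ _, max_le zero_le_one (min_le_left _ _)⟩
  have hle : ∀ s, |φ s - A.indicator 1 s| ≤ ‖A.indicator (1 : S → ℝ) s - ψ s‖ := by
    intro s
    have h01 : A.indicator (1 : S → ℝ) s = max 0 (min 1 (A.indicator (1 : S → ℝ) s)) := by
      by_cases hs : s ∈ A <;> simp [hs]
    rw [norm_sub_rev, Real.norm_eq_abs]
    conv_lhs => rw [h01]
    change |max 0 (min 1 (ψ s)) - _| ≤ _
    refine (abs_max_sub_max_le_max _ _ _ _).trans (max_le (by simp) ?_)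
    exact (abs_min_sub_min_le_max _ _ _ _).trans (max_le (by simp) le_rfl)
  have hφi : Integrable (fun s => |φ s - A.indicator 1 s|) ν :=
    (h1.sub hψi).norm.mono'
      ((φ.continuous.measurable.sub (measurable_one.indicator hA)).abs.aestronglyMeasurable)
      (.of_forall fun s => by rw [Real.norm_eq_abs, abs_abs]; exact hle s)
  have hsm : ∀ s, (ENNReal.ofReal |f s|).toReal • |φ s - A.indicator 1 s| =
      |φ s - A.indicator 1 s| * |f s| := fun s => by
    rw [ENNReal.toReal_ofReal (abs_nonneg _), smul_eq_mul, mul_comm]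
  refine ⟨φ, hφ, ?_, ?_⟩
  · have := (integrable_withDensity_iff_integrable_smul' hdm hdt).1 hφi
    simpa only [hsm] using this
  · have := integral_withDensity_eq_integral_toReal_smul hdm hdt
      (fun s => |φ s - A.indicator 1 s|)
    simp only [hsm] at this
    rw [← this]
    exact (integral_mono hφi (h1.sub hψi).norm hle).trans hψ

/-- Decomposability up to `ε`: the pointwise maximum of `y · w` and `z · w` is nearly attained by
a convex combination `φ y + (1 - φ) z`, where `φ` approximates the indicator of the set on which
`y · w` is the larger of the two. -/
lemma exists_selection_near_max {S : Type*} [TopologicalSpace S] [PolishSpace S]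
    [MeasurableSpace S] [BorelSpace S] {d : ℕ} {D : S → Set (Fin d → ℝ)}
    (hconv : ∀ s, Convex ℝ (D s)) {μ : Measure S} {w : S → Fin d → ℝ}
    (hwm : ∀ i, Measurable fun s => w s i) (hw : ∀ i, Integrable (fun s => w s i) μ)
    {y z : S →ᵇ (Fin d → ℝ)} (hy : ∀ s, y s ∈ D s) (hz : ∀ s, z s ∈ D s) {ε : ℝ} (hε : 0 < ε) :
    ∃ x : S →ᵇ (Fin d → ℝ), (∀ s, x s ∈ D s) ∧
      ∫ s, |pairing w x s - max (pairing w y s) (pairing w z s)| ∂μ ≤ ε := by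
  have hA : MeasurableSet {s | pairing w z s ≤ pairing w y s} :=
    measurableSet_le (measurable_pairing hwm z) (measurable_pairing hwm y)
  set A := {s | pairing w z s ≤ pairing w y s} with hAdef
  obtain ⟨φ, hφ, -, hφε⟩ := exists_continuous_approx_indicator
    ((measurable_pairing hwm y).sub (measurable_pairing hwm z))
    ((integrable_pairing hw y).sub (integrable_pairing hw z)) hA hε
  refine ⟨BoundedContinuousFunction.ofNormedAddCommGroup
    (fun s => φ s • y s + (1 - φ s) • z s) (by fun_prop) (‖y‖ + ‖z‖) fun s => ?_, fun s => ?_, ?_⟩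
  · refine (norm_add_le _ _).trans (add_le_add ?_ ?_)
    · rw [norm_smul, Real.norm_of_nonneg (hφ s).1]
      exact (mul_le_of_le_one_left (norm_nonneg _) (hφ s).2).trans (y.norm_coe_le_norm s)
    · rw [norm_smul, Real.norm_of_nonneg (sub_nonneg.2 (hφ s).2)]
      exact (mul_le_of_le_one_left (norm_nonneg _) (by linarith [(hφ s).1])).trans
        (z.norm_coe_le_norm s)
  · exact hconv s (hy s) (hz s) (hφ s).1 (sub_nonneg.2 (hφ s).2) (by ring)
  · refine le_of_eq_of_le (integral_congr_ae (.of_forall fun s => ?_)) hφε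
    have hx : ∑ i, (φ s • y s + (1 - φ s) • z s) i * w s i =
        φ s * pairing w y s + (1 - φ s) * pairing w z s := by
      simp only [pairing, Finset.mul_sum, ← Finset.sum_add_distrib, Pi.add_apply, Pi.smul_apply,
        smul_eq_mul]
      exact Finset.sum_congr rfl fun i _ => by ring
    change |∑ i, (φ s • y s + (1 - φ s) • z s) i * w s i - _| = _ * |pairing w y s - pairing w z s|
    rw [hx, ← abs_mul]
    congr 1
    by_cases hs : s ∈ A
    · rw [max_eq_left hs, indicator_of_mem hs, Pi.one_apply]
      ring
    · rw [max_eq_right (not_le.1 hs).le, indicator_of_notMem hs]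
      ring

/-- The `L¹(μ)`-closure of the functions `y · w`, for `y` ranging over the bounded continuous
selections of `D`. -/
def pairingClosure {S : Type*} [TopologicalSpace S] [MeasurableSpace S] {d : ℕ}
    (D : S → Set (Fin d → ℝ)) (μ : Measure S) (w : S → Fin d → ℝ) : Set (S → ℝ) :=
  {f | Integrable f μ ∧ ∀ ε > 0, ∃ y : S →ᵇ (Fin d → ℝ), (∀ s, y s ∈ D s) ∧
    ∫ s, |pairing w y s - f s| ∂μ ≤ ε}

lemma pairing_mem_pairingClosure {S : Type*} [TopologicalSpace S] [MeasurableSpace S]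
    [BorelSpace S] {d : ℕ} {D : S → Set (Fin d → ℝ)} {μ : Measure S} {w : S → Fin d → ℝ}
    (hw : ∀ i, Integrable (fun s => w s i) μ) {y : S →ᵇ (Fin d → ℝ)} (hy : ∀ s, y s ∈ D s) :
    pairing w y ∈ pairingClosure D μ w :=
  ⟨integrable_pairing hw y, fun ε hε => ⟨y, hy, by simpa using hε.le⟩⟩

lemma max_mem_pairingClosure {S : Type*} [TopologicalSpace S] [PolishSpace S]
    [MeasurableSpace S] [BorelSpace S] {d : ℕ} {D : S → Set (Fin d → ℝ)}
    (hconv : ∀ s, Convex ℝ (D s)) {μ : Measure S} {w : S → Fin d → ℝ}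
    (hwm : ∀ i, Measurable fun s => w s i) (hw : ∀ i, Integrable (fun s => w s i) μ)
    {f g : S → ℝ} (hf : f ∈ pairingClosure D μ w) (hg : g ∈ pairingClosure D μ w) :
    f ⊔ g ∈ pairingClosure D μ w := by
  obtain ⟨hfi, hf⟩ := hf
  obtain ⟨hgi, hg⟩ := hg
  refine ⟨hfi.sup hgi, fun ε hε => ?_⟩
  obtain ⟨y, hy, hyε⟩ := hf (ε / 3) (by positivity)
  obtain ⟨z, hz, hzε⟩ := hg (ε / 3) (by positivity)
  obtain ⟨x, hx, hxε⟩ := exists_selection_near_max hconv hwm hw hy hz (ε := ε / 3) (by positivity)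
  refine ⟨x, hx, ?_⟩
  have hpy := integrable_pairing hw y
  have hpz := integrable_pairing hw z
  have hpx := integrable_pairing hw x
  have i1 : Integrable (fun s => |pairing w x s - max (pairing w y s) (pairing w z s)|) μ :=
    (hpx.sub (hpy.sup hpz)).abs
  have i2 : Integrable (fun s => |pairing w y s - f s|) μ := (hpy.sub hfi).abs
  have i3 : Integrable (fun s => |pairing w z s - g s|) μ := (hpz.sub hgi).abs
  have hle : ∫ s, |pairing w x s - (f ⊔ g) s| ∂μ ≤
      ∫ s, (|pairing w x s - max (pairing w y s) (pairing w z s)| +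
        |pairing w y s - f s|) + |pairing w z s - g s| ∂μ := by
    refine integral_mono (hpx.sub (hfi.sup hgi)).abs ((i1.add i2).add i3) fun s => ?_
    have h1 := abs_sub_le (pairing w x s) (max (pairing w y s) (pairing w z s)) (max (f s) (g s))
    have h2 := abs_max_sub_max_le_max (pairing w y s) (pairing w z s) (f s) (g s)
    have h3 := max_le_add_of_nonneg (abs_nonneg (pairing w y s - f s))
      (abs_nonneg (pairing w z s - g s))
    change |pairing w x s - max (f s) (g s)| ≤ _
    linarith
  have e1 := integral_add (i1.add i2) i3
  have e2 := integral_add i1 i2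
  simp only [Pi.add_apply] at e1
  rw [e1, e2] at hle
  linarith

lemma partialSups_mem_pairingClosure {S : Type*} [TopologicalSpace S] [PolishSpace S]
    [MeasurableSpace S] [BorelSpace S] {d : ℕ} {D : S → Set (Fin d → ℝ)}
    (hconv : ∀ s, Convex ℝ (D s)) {μ : Measure S} {w : S → Fin d → ℝ}
    (hwm : ∀ i, Measurable fun s => w s i) (hw : ∀ i, Integrable (fun s => w s i) μ)
    {Y : ℕ → S →ᵇ (Fin d → ℝ)} (hY : ∀ n s, Y n s ∈ D s) (n : ℕ) :
    partialSups (fun n => pairing w (Y n)) n ∈ pairingClosure D μ w := by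
  induction n with
  | zero => simpa using pairing_mem_pairingClosure hw (hY 0)
  | succ n ih =>
    rw [← Order.succ_eq_add_one, partialSups_succ]
    exact max_mem_pairingClosure hconv hwm hw ih (pairing_mem_pairingClosure hw (hY _))

/-- The elements of the closure integrate to at most the supremum over selections. -/
lemma integral_le_of_mem_pairingClosure {S : Type*} [TopologicalSpace S]
    [MeasurableSpace S] [BorelSpace S] {d : ℕ} {D : S → Set (Fin d → ℝ)} {μ : Measure S}
    {w : S → Fin d → ℝ} (hw : ∀ i, Integrable (fun s => w s i) μ) {M : EReal}
    (hM : ∀ y : S →ᵇ (Fin d → ℝ), (∀ s, y s ∈ D s) → ((∫ s, pairing w y s ∂μ : ℝ) : EReal) ≤ M)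
    {f : S → ℝ} (hf : f ∈ pairingClosure D μ w) : ((∫ s, f s ∂μ : ℝ) : EReal) ≤ M := by
  refine EReal.le_of_forall_lt_iff_le.1 fun c hc => EReal.coe_le_coe_iff.2 ?_
  refine le_of_forall_pos_le_add fun ε hε => ?_
  obtain ⟨y, hy, hyε⟩ := hf.2 ε hε
  have h1 : ∫ s, pairing w y s ∂μ < c := EReal.coe_lt_coe_iff.1 ((hM y hy).trans_lt hc)
  have h2 := abs_integral_le_integral_abs (μ := μ) (f := fun s => pairing w y s - f s)
  rw [integral_sub (integrable_pairing hw y) hf.1] at h2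
  have h3 := neg_le_of_abs_le (h2.trans hyε)
  linarith

/-- The support function as the increasing limit of finite maxima over a dense sequence of
selections. -/
lemma iSup_partialSups_pairing {S : Type*} [TopologicalSpace S] {d : ℕ}
    {D : S → Set (Fin d → ℝ)} (w : S → Fin d → ℝ) {Y : ℕ → S →ᵇ (Fin d → ℝ)}
    (hY : ∀ n s, Y n s ∈ D s)
    (hdense : ∀ s, ∀ u ∈ D s, ∀ ε > 0, ∃ n, dist (Y n s) u < ε) (s : S) :
    ⨆ n, ((partialSups (fun n => pairing w (Y n)) n s : ℝ) : EReal) =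
      ⨆ u ∈ D s, ((∑ i, u i * w s i : ℝ) : EReal) := by
  apply le_antisymm
  · refine iSup_le fun n => ?_
    rw [Pi.partialSups_apply]
    obtain ⟨k, -, hk⟩ : ∃ k ≤ n, partialSups (fun x => pairing w (Y x) s) n = pairing w (Y k) s := by
      obtain ⟨k, hk, h⟩ := Finset.exists_mem_eq_sup' (Finset.nonempty_Iic (a := n))
        (fun x => pairing w (Y x) s)
      exact ⟨k, Finset.mem_Iic.1 hk, by rw [partialSups_apply, h]⟩
    rw [hk]
    exact le_iSup₂ (f := fun u (_ : u ∈ D s) => ((∑ i, u i * w s i : ℝ) : EReal)) (Y k s) (hY k s)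
  · refine iSup₂_le fun u hu => EReal.le_of_forall_lt_iff_le.1 fun c hc => ?_
    refine EReal.coe_le_coe_iff.2 (le_of_forall_pos_le_add fun ε hε => ?_)
    have hcont : Continuous fun v : Fin d → ℝ => ∑ i, v i * w s i := by fun_prop
    obtain ⟨δ, hδ, hδε⟩ := Metric.continuous_iff.1 hcont u ε hε
    obtain ⟨n, hn⟩ := hdense s u hu δ hδ
    have h1 := hδε (Y n s) hn
    rw [Real.dist_eq] at h1
    have h2 : partialSups (fun n => pairing w (Y n)) n s < c :=
      EReal.coe_lt_coe_iff.1 ((le_iSup (fun n =>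
        ((partialSups (fun n => pairing w (Y n)) n s : ℝ) : EReal)) n).trans_lt hc)
    have h3 : pairing w (Y n) s ≤ partialSups (fun n => pairing w (Y n)) n s :=
      le_partialSups (fun n => pairing w (Y n)) n s
    have h4 := neg_lt_of_abs_lt h1
    change ∑ i, Y n s i * w s i ≤ _ at h3
    linarith

/-- **Theorem (integral representation of the support function of continuous
selections).**
Let `S` be Polish and `D : S ⇉ ℝ^d` inner semicontinuous with nonempty closed convex
values such that `C_b(D) = {y ∈ C_b(S;ℝ^d) : y(s) ∈ D(s) ∀s}` is nonempty.  Then for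
every finite `ℝ^d`-valued Borel measure `λ` on `S`,
`sup_{y ∈ C_b(D)} ∫ y dλ = ∫ σ_{D(s)}(dλ/d|λ|) d|λ|`. -/
theorem stmt19
    {d : ℕ} (S : Type*)
    [TopologicalSpace S] [PolishSpace S] [MeasurableSpace S] [BorelSpace S]
    (D : S → Set (Fin d → ℝ))
    (hDisc : InnerSemicontinuous D)
    (hDne : ∀ s, (D s).Nonempty)
    (hDclosed : ∀ s, IsClosed (D s))
    (hDconv : ∀ s, Convex ℝ (D s))
    (hCbD : {y : S →ᵇ (Fin d → ℝ) | ∀ s, y s ∈ D s}.Nonempty)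
    (lam : Fin d → SignedMeasure S)
    -- `|λ|`: a total-variation measure for the vector measure `λ`
    (tv : Measure S) (htv : tv = ∑ i, (lam i).totalVariation) :
    (⨆ y ∈ {y : S →ᵇ (Fin d → ℝ) | ∀ s, y s ∈ D s},
        ((∑ i, sInt (lam i) (fun s => y s i) : ℝ) : EReal)) =
      eInt tv (fun s =>
        ⨆ u ∈ D s, ((∑ i, u i * (lam i).rnDeriv tv s : ℝ) : EReal)) := by
  obtain ⟨y₀, hy₀⟩ := hCbD
  have htvfin : IsFiniteMeasure tv := by
    rw [htv]
    infer_instance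
  have hle : ∀ i, (lam i).totalVariation ≤ tv := fun i => by
    rw [htv]
    exact Finset.single_le_sum (f := fun i => (lam i).totalVariation)
      (fun _ _ => Measure.zero_le _) (Finset.mem_univ i)
  let w : S → Fin d → ℝ := fun s i => (lam i).rnDeriv tv s
  have hwm : ∀ i, Measurable fun s => w s i := fun i => (lam i).measurable_rnDeriv tv
  have hw : ∀ i, Integrable (fun s => w s i) tv := fun i => (lam i).integrable_rnDeriv tv
  have hsInt : ∀ y : S →ᵇ (Fin d → ℝ),
      ∑ i, sInt (lam i) (fun s => y s i) = ∫ s, pairing w y s ∂tv := fun y => by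
    simp only [pairing]
    rw [integral_finsetSum _ fun i _ => integrable_coord_mul hw y i]
    exact Finset.sum_congr rfl fun i _ => sInt_eq_integral_mul_rnDeriv _ _ (hle i)
      ((continuous_apply i).comp y.continuous)
      (fun s => (norm_le_pi_norm (y s) i).trans (y.norm_coe_le_norm s))
  simp only [hsInt]
  apply le_antisymm
  · refine iSup₂_le fun y hy => integral_le_eInt (integrable_pairing hw y) fun s => ?_
    exact le_iSup₂ (f := fun u (_ : u ∈ D s) => ((∑ i, u i * w s i : ℝ) : EReal)) (y s) (hy s)
  · obtain ⟨Y, hY, hdense⟩ := exists_dense_selections hDisc hDclosed hDconv y₀ hy₀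
    have hmem := partialSups_mem_pairingClosure hDconv (μ := tv) hwm hw hY
    have hlim := tendsto_integral_eInt_iSup (fun n => (hmem n).1)
      (fun s m n h => (partialSups fun n => pairing w (Y n)).monotone h s)
    simp only [iSup_partialSups_pairing w hY hdense] at hlim
    refine le_of_tendsto' hlim fun n => integral_le_of_mem_pairingClosure hw (fun y hy => ?_) (hmem n)
    exact le_iSup₂ (f := fun (y : S →ᵇ (Fin d → ℝ)) (_ : y ∈ {y : S →ᵇ (Fin d → ℝ) | ∀ s, y s ∈ D s}) =>
      ((∫ s, pairing w y s ∂tv : ℝ) : EReal)) y hy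

end
end
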